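/- arXiv:2406.15184 — 3 statements merged into one kernel-verified Lean document; each statement's English description precedes it below -/
import Mathlib

section
/- Rousseau's Theorem on Sheffer functions. Let A be a finite set with |A| ≥ 2. An operation f on A is a Sheffer function (i.e. the singleton {f} is complete) if and only if f ∉ Pol(ρ) for every relation ρ on A of the following kinds: the graph of a fixed-point-free permutation of A all of whose cycles have the same prime length; a nontrivial equivalence relation on A (different from the equality relation and from A × A); and a nontrivial unary relation on A (a nonempty proper subset of A). Equivalently, the algebra (A; f) is primal if and only if it has no nontrivial automorphisms, no proper nonempty subalgebras, and no nontrivial congruences. -/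
universe u

/-- The type of finitary operations (of positive arity `n + 1`) on `A`. -/
abbrev Ops (A : Type u) : Type u := Σ n : ℕ, (Fin (n + 1) → A) → A

/-- A set of finitary operations on `A` is a clone if it contains all projection
operations and is closed under composition. -/
def IsClone {A : Type u} (C : Set (Ops A)) : Prop :=
  (∀ (n : ℕ) (i : Fin (n + 1)), (⟨n, fun x => x i⟩ : Ops A) ∈ C) ∧
  ∀ (n m : ℕ) (f : (Fin (n + 1) → A) → A) (g : Fin (n + 1) → (Fin (m + 1) → A) → A),
    (⟨n, f⟩ : Ops A) ∈ C → (∀ i, (⟨m, g i⟩ : Ops A) ∈ C) →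
    (⟨m, fun x => f fun i => g i x⟩ : Ops A) ∈ C

/-- The clone generated by a set `F` of operations: the least clone containing `F`. -/
def cloneGen {A : Type u} (F : Set (Ops A)) : Set (Ops A) :=
  ⋂₀ {C : Set (Ops A) | IsClone C ∧ F ⊆ C}

/-- The clone of all projection operations on `A`. -/
def projClone (A : Type u) : Set (Ops A) :=
  {f : Ops A | ∃ i : Fin (f.1 + 1), f.2 = fun x => x i}

/-- A clone `M` is maximal if it is a proper subclone of the clone of all operations
and the clone of all operations is the only clone properly containing it. -/
def IsMaximalClone {A : Type u} (M : Set (Ops A)) : Prop :=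
  IsClone M ∧ M ≠ Set.univ ∧
    ∀ D : Set (Ops A), IsClone D → M ⊆ D → D = M ∨ D = Set.univ

/-- A clone `C` is minimal if the clone of projections is its unique proper subclone. -/
def IsMinimalClone {A : Type u} (C : Set (Ops A)) : Prop :=
  IsClone C ∧ C ≠ projClone A ∧
    ∀ D : Set (Ops A), IsClone D → D ⊆ C → D = projClone A ∨ D = C

/-- An `n`-ary operation `f` preserves a `k`-ary relation `ρ` if applying `f`
coordinatewise to tuples from `ρ` always yields a tuple in `ρ`. -/
def Preserves {A : Type u} {n k : ℕ} (f : (Fin n → A) → A) (ρ : Set (Fin k → A)) : Prop :=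
  ∀ t : Fin n → Fin k → A, (∀ i, t i ∈ ρ) → (fun j => f fun i => t i j) ∈ ρ

/-- `Pol ρ` is the clone of all operations preserving the relation `ρ`. -/
def Pol {A : Type u} {k : ℕ} (ρ : Set (Fin k → A)) : Set (Ops A) :=
  {f : Ops A | Preserves f.2 ρ}

universe v

/-- `InvRel f R`: the relation `R`, with an arbitrary index type, is closed under `f`. -/
def InvRel {A : Type u} {n : ℕ} (f : (Fin n → A) → A) {I : Type*} (R : Set (I → A)) : Prop :=
  ∀ t : Fin n → I → A, (∀ k, t k ∈ R) → (fun i => f fun k => t k i) ∈ R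

/-- A relation is totally reflexive if it contains every tuple with a repeated entry. -/
def TotallyReflexive {A : Type u} {I : Type*} (R : Set (I → A)) : Prop :=
  ∀ x : I → A, ¬ Function.Injective x → x ∈ R

/-- The algebra `(A; f)` has no proper subalgebras, no nontrivial congruences and no
nontrivial automorphisms. -/
structure Rigid {A : Type u} {n : ℕ} (f : (Fin n → A) → A) : Prop where
  sub : ∀ B : Set A, B.Nonempty → (∀ x : Fin n → A, (∀ k, x k ∈ B) → f x ∈ B) → ∀ a, a ∈ B
  con : ∀ r : A → A → Prop, Equivalence r →
    (∀ x y : Fin n → A, (∀ k, r (x k) (y k)) → r (f x) (f y)) →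
    (∀ a b, r a b → a = b) ∨ ∀ a b, r a b
  aut : ∀ π : Equiv.Perm A, (∀ x : Fin n → A, π (f x) = f fun k => π (x k)) → ∀ a, π a = a

namespace Rigid

open Function

variable {A : Type u} {n : ℕ} {f : (Fin n → A) → A}

theorem surjective [Nonempty A] (hf : Rigid f) : Surjective f := fun a =>
  hf.sub (Set.range f) ⟨f fun _ => Classical.arbitrary A, Set.mem_range_self _⟩
    (fun x _ => Set.mem_range_self x) a

theorem not_idempotent [Nontrivial A] (hf : Rigid f) (a : A) : f (fun _ => a) ≠ a := by
  intro h
  obtain ⟨b, hb⟩ := exists_ne a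
  refine hb (hf.sub {a} ⟨a, rfl⟩ (fun x hx => ?_) b)
  have : x = fun _ => a := funext hx
  rw [this, h]
  rfl

/-- If every `s`-tuple has a common `P`-witness, and there are no proper totally reflexive
relations of arity exceeding `s`, then there is a witness for all tuples simultaneously. -/
theorem exists_common_witness [Fintype A] [Nonempty A] {κ : Type*} {h : ℕ}
    (P : (κ → A) → (Fin h → A) → Prop)
    (hP : ∀ (u : Fin n → κ → A) (z : Fin n → Fin h → A), (∀ k, P (u k) (z k)) →
      P (fun i => f fun k => u k i) (fun i => f fun k => z k i))
    (s : ℕ) (hs : ∀ z : Fin s → A, ∃ u, ∀ ι : Fin h → Fin s, P u (z ∘ ι))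
    (hT : ∀ t, s < t → ∀ R : Set (Fin t → A), InvRel f R → TotallyReflexive R → R = Set.univ) :
    ∃ u, ∀ z, P u z := by
  have key : ∀ d, ∀ z : Fin (s + d) → A, ∃ u, ∀ ι : Fin h → Fin (s + d), P u (z ∘ ι) := by
    intro d
    induction d with
    | zero => exact hs
    | succ d ih =>
      intro z
      have := hT (s + (d + 1)) (by omega)
        {z | ∃ u, ∀ ι : Fin h → Fin (s + (d + 1)), P u (z ∘ ι)} ?_ ?_
      · exact this.ge (Set.mem_univ z)
      · intro t ht
        choose u hu using ht
        exact ⟨_, fun ι => hP u (fun k => t k ∘ ι) fun k => hu k ι⟩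
      · intro x hx
        simp only [Injective, not_forall] at hx
        obtain ⟨a, b, hab, hne⟩ := hx
        obtain ⟨b', rfl⟩ | hb := Classical.em (∃ c : Fin (s + d), Fin.succAbove b c = a)
        · obtain ⟨u, hu⟩ := ih (x ∘ Fin.succAbove b)
          refine ⟨u, fun ι => ?_⟩
          have hc : ∀ r, ∃ c : Fin (s + d), x (b.succAbove c) = x (ι r) := by
            intro r
            by_cases hr : ι r = b
            · exact ⟨b', by rw [hr, hab]⟩
            · obtain ⟨c, hc⟩ := Fin.exists_succAbove_eq hr
              exact ⟨c, by rw [hc]⟩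
          choose c hc using hc
          have : x ∘ ι = (x ∘ b.succAbove) ∘ c := funext fun r => (hc r).symm
          rw [this]
          exact hu c
        · exact absurd (Fin.exists_succAbove_eq hne) hb
  obtain ⟨u, hu⟩ : ∃ u, ∀ ι : Fin h → Fin (s + Fintype.card A),
      P u ((fun i : Fin (s + Fintype.card A) => if hi : s ≤ i.1 then
        (Fintype.equivFin A).symm ⟨i.1 - s, by have := i.2; omega⟩ else
        Classical.arbitrary A) ∘ ι) := by
    exact key _ _
  refine ⟨u, fun z => ?_⟩
  convert hu fun r => ⟨s + (Fintype.equivFin A (z r)).1, by omega⟩ using 1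
  funext r
  simp

/-- A symmetric totally reflexive relation of the largest possible arity extends to one
whose complement has the exchange property. -/
theorem exists_exchange [Fintype A] [Nonempty A] (hf : Rigid f) {h : ℕ} (hh : 2 ≤ h)
    (hT : ∀ t, h < t → ∀ R : Set (Fin t → A), InvRel f R → TotallyReflexive R → R = Set.univ)
    (S : Set (Fin h → A)) (hSi : InvRel f S) (hSr : TotallyReflexive S)
    (hSs : ∀ (π : Equiv.Perm (Fin h)), ∀ x ∈ S, x ∘ π ∈ S) (hSu : S ≠ Set.univ) :
    ∃ σ, S ⊆ σ ∧ InvRel f σ ∧ TotallyReflexive σ ∧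
      (∀ (π : Equiv.Perm (Fin h)), ∀ x ∈ σ, x ∘ π ∈ σ) ∧ σ ≠ Set.univ ∧
      ∀ x, x ∉ σ → ∀ u, ∃ i, update x i u ∉ σ := by
  obtain ⟨σ, hSσ, hmax⟩ := Set.Finite.exists_le_maximal (s := {S : Set (Fin h → A) |
    InvRel f S ∧ TotallyReflexive S ∧ (∀ (π : Equiv.Perm (Fin h)), ∀ x ∈ S, x ∘ π ∈ S) ∧
      S ≠ Set.univ}) (Set.toFinite _) ⟨hSi, hSr, hSs, hSu⟩
  obtain ⟨⟨hi, hr, hs, hu⟩, hmax⟩ := hmax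
  refine ⟨σ, hSσ, hi, hr, hs, hu, ?_⟩
  have z0 : Fin h := ⟨0, by omega⟩
  have upd : ∀ (x : Fin h → A) (ι : Fin h → Fin h) (i : Fin h),
      update (x ∘ ι) i (x z0) = x ∘ update ι i z0 := by
    intro x ι i
    rw [comp_update]
  have hup : ∀ (t : Fin n → Fin h → A) (i : Fin h) (u : Fin n → A),
      (update (fun j => f fun k => t k j) i (f u)) =
        fun j => f fun k => update (t k) i (u k) j := by
    intro t i u
    funext j
    by_cases hj : j = i
    · subst hj; simp
    · simp [hj]
  set Q : Set (Fin h → A) :=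
    {x | ∃ u, ∀ (ι : Fin h → Fin h) (i : Fin h), update (x ∘ ι) i u ∈ σ} with hQ
  have hσQ : σ ⊆ Q := by
    intro x hx
    refine ⟨x z0, fun ι i => ?_⟩
    rw [upd]
    by_cases hb : Injective (update ι i z0)
    · exact hs (Equiv.ofBijective _ (Finite.injective_iff_bijective.1 hb)) x hx
    · exact hr _ fun hc => hb hc.of_comp
  have hQr : TotallyReflexive Q := by
    intro x hx
    refine ⟨x z0, fun ι i => ?_⟩
    rw [upd]
    refine hr _ fun hc => hx ?_
    have hb : Bijective (update ι i z0) := Finite.injective_iff_bijective.1 hc.of_comp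
    exact (Injective.of_comp_iff' x hb).1 hc
  have hQi : InvRel f Q := by
    intro t ht
    choose u hu using ht
    refine ⟨f u, fun ι i => ?_⟩
    have := hi (fun k => update (t k ∘ ι) i (u k)) fun k => hu k ι i
    rw [← hup] at this
    exact this
  have hQs : ∀ (π : Equiv.Perm (Fin h)), ∀ x ∈ Q, x ∘ π ∈ Q := by
    rintro π x ⟨u, hu⟩
    exact ⟨u, fun ι i => hu (π ∘ ι) i⟩
  by_cases hQu : Q = Set.univ
  · exfalso
    obtain ⟨u, hu'⟩ := exists_common_witness (f := f) (κ := Fin 1)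
      (fun u z => ∀ i, update z i (u 0) ∈ σ)
      (by
        intro u z huz i
        have := hi (fun k => update (z k) i (u k 0)) fun k => huz k i
        rwa [← hup] at this) h
      (by
        intro z
        obtain ⟨u, hu⟩ : z ∈ Q := hQu ▸ Set.mem_univ z
        exact ⟨fun _ => u, fun ι i => hu ι i⟩) hT
    refine hu (Set.eq_univ_of_forall fun z => ?_)
    have := hf.sub {u | ∀ z i, update z i u ∈ σ} ⟨u 0, hu'⟩ (by
      intro x hx z i
      choose w hw using fun r => hf.surjective (z r)
      have h1 := hi (fun k => update (fun r => w r k) i (x k)) fun k => hx k _ i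
      rw [← hup] at h1
      simpa [hw] using h1) (z z0) z z0
    simpa using this
  · have hQσ : Q ⊆ σ := hmax ⟨hQi, hQr, hQs, hQu⟩ hσQ
    intro x hx u
    by_contra! hcon
    refine hx (hQσ ⟨u, fun ι i => ?_⟩)
    by_contra hmem
    have hinj : Injective (update (x ∘ ι) i u) := by
      by_contra hni
      exact hmem (hr _ hni)
    have hιi : ∀ r s, r ≠ i → s ≠ i → ι r = ι s → r = s := by
      intro r s hr hs hrs
      apply hinj
      simp [hr, hs, hrs]
    obtain ⟨i', hi'⟩ : ∃ i', ∀ r, r ≠ i → ι r ≠ i' := by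
      by_contra! hcov
      choose g hg hg' using hcov
      have hginj : Injective g := fun a b hab => by rw [← hg' a, ← hg' b, hab]
      obtain ⟨r, hr⟩ := (Finite.injective_iff_surjective.1 hginj) i
      exact hg r hr
    have hκ : Injective (update ι i i') := by
      intro r s hrs
      by_cases hr : r = i <;> by_cases hs : s = i
      · rw [hr, hs]
      · subst hr; simp [hs] at hrs; exact absurd hrs.symm (hi' s hs)
      · subst hs; simp [hr] at hrs; exact absurd hrs (hi' r hr)
      · simp [hr, hs] at hrs; exact hιi r s hr hs hrs
    have := hs (Equiv.ofBijective _ (Finite.injective_iff_bijective.1 hκ)) _ (hcon i')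
    apply hmem
    convert this using 1
    funext r
    by_cases hr : r = i
    · subst hr; simp
    · simp [hr, hi' r hr]

/-- The complement of an invariant totally reflexive relation of arity at least three. -/
structure CoRelation {h : ℕ} (f : (Fin n → A) → A) (E : Set (Fin h → A)) : Prop where
  three_le : 3 ≤ h
  inj : ∀ x ∈ E, Injective x
  exists_col : ∀ z : Fin h → Fin n → A, (fun i => f (z i)) ∈ E → ∃ k, (fun i => z i k) ∈ E

/-- A nonempty subset of `E` with the exchange property. -/
structure IsExchange {h : ℕ} (E H : Set (Fin h → A)) : Prop where
  nonempty : H.Nonempty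
  subset : H ⊆ E
  exch : ∀ e ∈ H, ∀ u, ∃ i, update e i u ∈ H

/-- The tuples that `f` carries into `H` when placed in the `j`-th argument, for some choice of
the other arguments. -/
def pull {h : ℕ} (f : (Fin n → A) → A) (j : Fin n) (H : Set (Fin h → A)) : Set (Fin h → A) :=
  {t | ∃ c : Fin n → A, (fun i => f (update c j (t i))) ∈ H}

/-- Interchangeability of two elements for membership in `H`. -/
def theta {h : ℕ} (H : Set (Fin h → A)) (a b : A) : Prop :=
  ∀ (t : Fin h → A) (s : Fin h), update t s a ∈ H ↔ update t s b ∈ H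

section Exchange

variable {h : ℕ} {E H : Set (Fin h → A)}

theorem comp_update_row {B : Type*} (g : B → A) (z : Fin h → B) (i : Fin h) (w : B) :
    update (fun r => g (z r)) i (g w) = fun r => g (update z i w r) := by
  funext r
  by_cases hr : r = i
  · subst hr; simp
  · simp [hr]

theorem not_injective_of_two_values (hh : 3 ≤ h) {x : Fin h → A} {a b : A}
    (hx : ∀ i, x i = a ∨ x i = b) : ¬ Injective x := by
  intro hinj
  have h01 : (⟨0, by omega⟩ : Fin h) ≠ ⟨1, by omega⟩ := by simp
  have h02 : (⟨0, by omega⟩ : Fin h) ≠ ⟨2, by omega⟩ := by simp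
  have h12 : (⟨1, by omega⟩ : Fin h) ≠ ⟨2, by omega⟩ := by simp
  have e01 := hinj.ne h01
  have e02 := hinj.ne h02
  have e12 := hinj.ne h12
  have := hx ⟨0, by omega⟩
  have := hx ⟨1, by omega⟩
  have := hx ⟨2, by omega⟩
  grind

theorem mem_of_two_rows (hE : CoRelation f E) (hH : IsExchange E H) (j : Fin n) (t : Fin h → A)
    {c c' : Fin n → A} {C D : Fin h → Fin n → A} (hC : ∀ i, C i = c ∨ C i = c')
    (hD : ∀ i, D i = c ∨ D i = c') (hm : (fun i => f (update (C i) j (t i))) ∈ H) :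
    (fun i => f (update (D i) j (t i))) ∈ H := by
  classical
  have key : ∀ S : Finset (Fin h),
      (fun i => f (update (if i ∈ S then D i else C i) j (t i))) ∈ H := by
    intro S
    induction S using Finset.induction_on with
    | empty => simpa using hm
    | insert a S ha ih =>
      obtain ⟨i, hi⟩ := hH.exch _ ih (f (update (D a) j (t a)))
      rw [comp_update_row f] at hi
      obtain rfl | hia := eq_or_ne i a
      · convert hi using 3 with r
        by_cases hr : r = i
        · subst hr; simp
        · simp [hr]
      · exfalso
        obtain ⟨k, hk⟩ := hE.exists_col _ (hH.subset hi)
        have hinj := hE.inj _ hk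
        by_cases hkj : k = j
        · subst hkj
          refine hia (hinj ?_)
          simp [Ne.symm hia]
        · refine not_injective_of_two_values hE.three_le (a := c k) (b := c' k) (fun r => ?_) hinj
          have h1 := hC r
          have h2 := hD r
          have h3 := hD a
          by_cases hr : r = i
          · subst hr
            simp only [update_self, update_of_ne hkj]
            grind
          · simp only [update_of_ne hr, update_of_ne hkj]
            grind
  simpa using key Finset.univ

theorem mem_pull_iff (hE : CoRelation f E) (hH : IsExchange E H) (j : Fin n) (t : Fin h → A)
    {c c' : Fin n → A} {C : Fin h → Fin n → A} (hC : ∀ i, C i = c ∨ C i = c') :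
    (fun i => f (update (C i) j (t i))) ∈ H ↔ t ∈ pull f j H := by
  constructor
  · intro hm
    exact ⟨c, mem_of_two_rows hE hH j t hC (fun _ => Or.inl rfl) hm⟩
  · rintro ⟨d, hd⟩
    have := mem_of_two_rows (c := d) (c' := c) (D := fun _ => c) hE hH j t
      (fun _ => Or.inl rfl) (fun _ => Or.inr rfl) hd
    exact mem_of_two_rows (c := c) (c' := c') hE hH j t (fun _ => Or.inl rfl) hC this

theorem pull_isExchange (hE : CoRelation f E) (hH : IsExchange E H) (j : Fin n)
    (hne : (pull f j H).Nonempty) : IsExchange E (pull f j H) := by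
  have hh := hE.three_le
  refine ⟨hne, ?_, ?_⟩
  · rintro t ⟨c, hc⟩
    obtain ⟨k, hk⟩ := hE.exists_col _ (hH.subset hc)
    by_cases hkj : k = j
    · subst hkj
      simpa using hk
    · exact absurd (hE.inj _ hk)
        (not_injective_of_two_values hh (a := c k) (b := c k) (by simp [hkj]))
  · rintro t ⟨c, hc⟩ u
    obtain ⟨i, hi⟩ := hH.exch _ hc (f (update c j u))
    rw [comp_update_row (fun v => f (update c j v))] at hi
    exact ⟨i, c, hi⟩

theorem exists_pull [Nonempty A] (hf : Rigid f) (hE : CoRelation f E) (hH : IsExchange E H) :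
    ∃ j, IsExchange E (pull f j H) := by
  classical
  have hh := hE.three_le
  let J : (Fin h → Fin n → A) → Finset (Fin n) := fun z =>
    Finset.univ.filter fun k => (fun i => z i k) ∈ E
  have hJ : ∀ z k, k ∈ J z ↔ (fun i => z i k) ∈ E := fun z k => by simp [J]
  obtain ⟨z, hzH, hmin⟩ : ∃ z : Fin h → Fin n → A, (fun i => f (z i)) ∈ H ∧
      ∀ z' : Fin h → Fin n → A, (fun i => f (z' i)) ∈ H → (J z).card ≤ (J z').card := by
    obtain ⟨e, he⟩ := hH.nonempty
    choose z hz using fun i => hf.surjective (e i)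
    have hne : {z : Fin h → Fin n → A | (fun i => f (z i)) ∈ H}.Nonempty :=
      ⟨z, by simpa [hz] using he⟩
    exact ⟨argminOn (fun z => (J z).card) _ hne, argminOn_mem _ _ hne,
      fun z' hz' => argminOn_le (fun z => (J z).card)
        {z : Fin h → Fin n → A | (fun i => f (z i)) ∈ H} hz'⟩
  have hnot : ∀ {y : Fin h → A} {a b : Fin h}, a ≠ b → y a = y b → y ∉ E :=
    fun hab hy hm => hab (hE.inj _ hm hy)
  have rep : ∀ (y : Fin h → Fin n → A) (i p : Fin h) (w : Fin n → A) (k : Fin n), i ≠ p →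
      w k = y p k → (fun r => update y i w r k) ∉ E := by
    intro y i p w k hip hw
    refine hnot hip ?_
    simp [Ne.symm hip, hw]
  obtain ⟨j, hj⟩ := hE.exists_col _ (hH.subset hzH)
  let p : Fin h := ⟨0, by omega⟩
  let q : Fin h := ⟨1, by omega⟩
  have hpq : p ≠ q := by simp [p, q]
  have huniq : ∀ k, k ≠ j → (fun i => z i k) ∉ E := by
    intro k hkj hk
    obtain ⟨i, hi⟩ := hH.exch _ hzH (f (update (z p) j (z q j)))
    rw [comp_update_row f] at hi
    have hle := hmin _ hi
    by_cases hip : i = p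
    · subst hip
      refine absurd hle (not_le.2 (Finset.card_lt_card ⟨fun l hl => ?_, fun hsub => ?_⟩))
      · rw [hJ] at hl ⊢
        by_cases hlj : l = j
        · rwa [hlj]
        · convert hl using 2 with r
          by_cases hr : r = p
          · rw [hr]; simp [hlj]
          · simp [hr]
      · have := hsub ((hJ _ _).2 hj)
        rw [hJ] at this
        exact rep z p q _ j hpq (by simp) this
    · have h1 : J (update z i (update (z p) j (z q j))) ⊆ {j} := by
        intro l hl
        rw [hJ] at hl
        rw [Finset.mem_singleton]
        by_contra hlj
        exact rep z i p _ l hip (by simp [hlj]) hl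
      have h2 : ({k, j} : Finset (Fin n)) ⊆ J z := by
        intro l hl
        rw [hJ]
        rw [Finset.mem_insert, Finset.mem_singleton] at hl
        obtain rfl | rfl := hl <;> assumption
      have h3 := Finset.card_le_card h1
      have h4 := Finset.card_le_card h2
      rw [Finset.card_pair hkj] at h4
      rw [Finset.card_singleton] at h3
      omega
  let Y : Finset (Fin h) → Fin h → Fin n → A := fun S i =>
    if i ∈ S then update (z p) j (z i j) else z i
  have hYj : ∀ S i, Y S i j = z i j := by
    intro S i
    by_cases hi : i ∈ S <;> simp [Y, hi]
  have hYp : ∀ S k, Y S p k = z p k := by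
    intro S k
    by_cases hi : p ∈ S
    · by_cases hk : k = j
      · subst hk; simp [Y, hi]
      · simp [Y, hi, hk]
    · simp [Y, hi]
  have key : ∀ S : Finset (Fin h), (fun i => f (Y S i)) ∈ H ∧
      ∀ k, k ≠ j → (fun i => Y S i k) ∉ E := by
    intro S
    induction S using Finset.induction_on with
    | empty => exact ⟨by simpa [Y] using hzH, by simpa [Y] using huniq⟩
    | insert m S hm ih =>
      obtain ⟨ihH, ihE⟩ := ih
      have hcol : ∀ i k, k ≠ j →
          (fun r => update (Y S) i (update (z p) j (z m j)) r k) ∉ E := by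
        intro i k hk
        by_cases hip : i = p
        · convert ihE k hk using 3 with r
          by_cases hr : r = i
          · subst hr; simp [hk, hip, hYp]
          · simp [hr]
        · exact rep _ _ p _ _ hip (by simp [hk, hYp])
      have hY : Y (insert m S) = update (Y S) m (update (z p) j (z m j)) := by
        funext r
        by_cases hr : r = m
        · subst hr; simp [Y]
        · simp [Y, hr]
      obtain ⟨i, hi⟩ := hH.exch _ ihH (f (update (z p) j (z m j)))
      rw [comp_update_row f] at hi
      by_cases him : i = m
      · subst him
        rw [hY]
        exact ⟨hi, hcol i⟩
      · exfalso
        obtain ⟨k, hk⟩ := hE.exists_col _ (hH.subset hi)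
        by_cases hkj : k = j
        · subst hkj
          exact rep _ _ m _ _ him (by simp [hYj]) hk
        · exact hcol i k hkj hk
  refine ⟨j, pull_isExchange hE hH j ⟨fun i => z i j, z p, ?_⟩⟩
  simpa [Y] using (key Finset.univ).1

theorem theta_equivalence (H : Set (Fin h → A)) : Equivalence (theta H) :=
  ⟨fun _ _ _ => Iff.rfl, fun hab t s => (hab t s).symm,
    fun hab hbc t s => (hab t s).trans (hbc t s)⟩

theorem mem_iff_of_theta {x y : Fin h → A} (hxy : ∀ i, theta H (x i) (y i)) :
    x ∈ H ↔ y ∈ H := by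
  classical
  have key : ∀ S : Finset (Fin h), x ∈ H ↔ (fun i => if i ∈ S then y i else x i) ∈ H := by
    intro S
    induction S using Finset.induction_on with
    | empty => simp
    | insert a S ha ih =>
      rw [ih]
      have := hxy a (fun i => if i ∈ S then y i else x i) a
      convert this using 2
      · funext r
        by_cases hr : r = a
        · subst hr; simp [ha]
        · simp [hr]
      · funext r
        by_cases hr : r = a
        · subst hr; simp
        · simp [hr]
  simpa using key Finset.univ

theorem theta_pull_of_theta (hE : CoRelation f E) (hH : IsExchange E H) (j : Fin n)
    (c : Fin n → A) {a a' : A} (ha : theta H (f (update c j a)) (f (update c j a'))) :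
    theta (pull f j H) a a' := by
  intro t s
  rw [← mem_pull_iff (c := c) (c' := c) (C := fun _ => c) hE hH j _ (fun _ => Or.inl rfl),
    ← mem_pull_iff (c := c) (c' := c) (C := fun _ => c) hE hH j _ (fun _ => Or.inl rfl)]
  rw [← comp_update_row (fun v => f (update c j v)), ← comp_update_row (fun v => f (update c j v))]
  exact ha _ s

theorem theta_of_theta_pull (hE : CoRelation f E) (hH : IsExchange E H) (j : Fin n)
    (hsurj : ∀ c : Fin n → A, ∀ b, ∃ a, theta H (f (update c j a)) b)
    (c c' : Fin n → A) {a a' : A} (ha : theta (pull f j H) a a') :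
    theta H (f (update c j a)) (f (update c' j a')) := by
  intro t' s
  choose t ht using fun r => hsurj c (t' r)
  have h1 : ∀ (d : Fin n → A) (v : A), update t' s (f (update d j v)) ∈ H ↔
      (fun r => f (update (update (fun _ => c) s d r) j (update t s v r))) ∈ H := by
    intro d v
    refine mem_iff_of_theta fun r => ?_
    by_cases hr : r = s
    · subst hr
      simpa using (theta_equivalence H).refl _
    · simpa [hr] using (theta_equivalence H).symm (ht r)
  have h2 : ∀ d : Fin n → A, ∀ i, update (fun _ => c) s d i = c ∨
      update (fun _ : Fin h => c) s d i = d := by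
    intro d i
    by_cases hr : i = s
    · subst hr; simp
    · simp [hr]
  rw [h1, h1, mem_pull_iff hE hH j _ (h2 c), mem_pull_iff hE hH j _ (h2 c')]
  exact ha t s

theorem exists_injective_quot [Finite A] (hE : CoRelation f E) (hH : IsExchange E H) (j : Fin n)
    (c : Fin n → A) :
    ∃ F : Quotient ⟨theta (pull f j H), theta_equivalence _⟩ →
      Quotient ⟨theta H, theta_equivalence H⟩, Injective F ∧
      ∀ Q, F Q = Quotient.mk _ (f (update c j Q.out)) := by
  refine ⟨fun Q => Quotient.mk _ (f (update c j Q.out)), fun Q Q' hQ => ?_, fun Q => rfl⟩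
  have := theta_pull_of_theta hE hH j c (Quotient.exact hQ)
  rw [← Q.out_eq, ← Q'.out_eq]
  exact Quotient.sound this

end Exchange

/-- A rigid algebra has no periodic sequence of equivalences `θ i` such that, up to `θ i`, the
operation `f` depends bijectively on its `l i`-th argument up to `θ (i + 1)`. -/
theorem no_periodic_equivalences [Finite A] [Nontrivial A] (hf : Rigid f)
    (θ : ℕ → A → A → Prop) (l : ℕ → Fin n) (d : ℕ) (hd : 0 < d)
    (eqv : ∀ i, Equivalence (θ i)) (per : ∀ i, θ (i + d) = θ i) (lper : ∀ i, l (i + d) = l i)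
    (ker : ∀ i a a', θ i (f fun _ => a) (f fun _ => a') → θ (i + 1) a a')
    (map : ∀ i x x', θ (i + 1) (x (l i)) (x' (l i)) → θ i (f x) (f x'))
    (proper : ¬ ∀ a b, θ 0 a b) : False := by
  classical
  have sep : ∀ a b, (∀ i, θ i a b) → a = b := by
    refine (hf.con (fun a b => ∀ i, θ i a b) ?_ ?_).resolve_right fun h =>
      proper fun a b => h a b 0
    · exact ⟨fun a i => (eqv i).refl a, fun h i => (eqv i).symm (h i),
        fun h h' i => (eqv i).trans (h i) (h' i)⟩
    · exact fun x y hxy i => map i x y (hxy _ _)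
  have sepS : ∀ a b, (∀ i, θ (i + 1) a b) → a = b := fun a b hab => sep a b fun i => by
    have := hab (i + d - 1)
    rwa [show i + d - 1 + 1 = i + d by omega, per] at this
  have ginj : Injective fun a : A => f fun _ => a := fun a a' haa => by
    refine sepS a a' fun i => ker i a a' ?_
    simp only at haa
    rw [haa]
    exact (eqv i).refl _
  let G : Equiv.Perm A := Equiv.ofBijective _ (Finite.injective_iff_bijective.1 ginj)
  have hG : ∀ a, G a = f fun _ => a := fun a => rfl
  have hGf : ∀ i x, θ i (f x) (G (x (l i))) := fun i x => map i _ _ ((eqv _).refl _)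
  have hG1 : ∀ i a a', θ i (G a) (G a') ↔ θ (i + 1) a a' := fun i a a' =>
    ⟨ker i a a', fun h => map i _ _ h⟩
  have hGk : ∀ k i a a', θ i ((G ^ k) a) ((G ^ k) a') ↔ θ (i + k) a a' := by
    intro k
    induction k with
    | zero => intro i a a'; simp
    | succ k ih =>
      intro i a a'
      rw [pow_succ', Equiv.Perm.mul_apply, Equiv.Perm.mul_apply, hG1, ih,
        show i + 1 + k = i + (k + 1) by omega]
  have hpath : ∀ k, ∀ a : (Fin k → Fin n) → A, ∃ y, ∀ i,
      θ i y ((G ^ k) (a fun r => l (i + r))) := by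
    intro k
    induction k with
    | zero =>
      intro a
      refine ⟨a Fin.elim0, fun i => ?_⟩
      rw [Subsingleton.elim (fun r : Fin 0 => l (i + r)) Fin.elim0]
      exact (eqv i).refl _
    | succ k ih =>
      intro a
      choose y hy using fun j : Fin n => ih fun p => a (Fin.cons j p)
      refine ⟨f y, fun i => (eqv i).trans (hGf i y) ?_⟩
      rw [pow_succ', Equiv.Perm.mul_apply, hG1]
      convert hy (l i) (i + 1) using 3
      funext r
      refine Fin.cases ?_ (fun r => ?_) r
      · simp
      · simp [Nat.add_right_comm, ← Nat.add_assoc]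
  have lper' : ∀ m i, l (i + m * d) = l i := by
    intro m
    induction m with
    | zero => simp
    | succ m ih => intro i; rw [Nat.succ_mul, ← Nat.add_assoc, lper, ih]
  obtain ⟨D, hD0, hDG, m, rfl⟩ : ∃ D, 0 < D ∧ G ^ D = 1 ∧ d ∣ D := by
    refine ⟨d * orderOf G, Nat.mul_pos hd (orderOf_pos G), ?_, dvd_mul_right _ _⟩
    rw [Nat.mul_comm, pow_mul, pow_orderOf_eq_one, one_pow]
  have hone : ∀ i e, (∀ r : Fin (d * m), l (i + e + r) = l (i + r)) → G ^ e = 1 := by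
    intro i e hie
    have hall : ∀ r, l (r + e) = l r := by
      intro r
      have hle : i ≤ r + i * d := le_trans (Nat.le_mul_of_pos_right i hd) (Nat.le_add_left _ _)
      obtain ⟨s, hs⟩ := Nat.exists_eq_add_of_le hle
      have hmod : ∀ j, l (j + s) = l (j + s % (d * m)) := by
        intro j
        conv_lhs => rw [← Nat.mod_add_div s (d * m)]
        rw [show j + (s % (d * m) + d * m * (s / (d * m))) =
          j + s % (d * m) + m * (s / (d * m)) * d by ring, lper']
      have := hie ⟨s % (d * m), Nat.mod_lt _ hD0⟩
      simp only at this
      rw [← lper' i r, ← lper' i (r + e), show r + e + i * d = i + e + s by omega, hs, hmod, hmod,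
        this]
    ext a
    refine hf.aut (G ^ e) (fun x => sep _ _ fun r => ?_) a
    refine (eqv r).trans ?_ ((eqv r).symm (hGf r _))
    have h1 := (hGk e r _ _).2 (hGf (r + e) x)
    rw [hall] at h1
    convert h1 using 1
    rw [← Equiv.Perm.mul_apply, ← Equiv.Perm.mul_apply, ← pow_succ', pow_succ]
  obtain ⟨α⟩ : Nonempty A := inferInstance
  obtain ⟨y, hy⟩ := hpath (d * m) fun p =>
    if h : ∃ i : ℕ, (fun r : Fin (d * m) => l (i + r)) = p then (G ^ h.choose)⁻¹ α else α
  have hyα : ∀ i, θ 0 ((G ^ i) y) α := by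
    intro i
    have h0 := hy i
    have hex : ∃ i' : ℕ, (fun r : Fin (d * m) => l (i' + r)) =
        fun r : Fin (d * m) => l (i + r) := ⟨i, rfl⟩
    rw [dif_pos hex, hDG, Equiv.Perm.one_apply] at h0
    have hGi : G ^ hex.choose = G ^ i := by
      have hsp := hex.choose_spec
      obtain hle | hle := le_total i hex.choose
      · obtain ⟨e, he⟩ := Nat.exists_eq_add_of_le hle
        rw [he] at hsp ⊢
        rw [pow_add, hone i e fun r => congrFun hsp r, mul_one]
      · obtain ⟨e, he⟩ := Nat.exists_eq_add_of_le hle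
        have := hone hex.choose e fun r => by rw [← he]; exact (congrFun hsp r).symm
        conv_rhs => rw [he]
        rw [pow_add, this, mul_one]
    rw [hGi] at h0
    have h1 := (hGk i 0 y ((G ^ i)⁻¹ α)).2 (by rwa [Nat.zero_add])
    simpa using h1
  refine hf.not_idempotent y (sep _ _ fun i => ?_)
  rw [← hG, ← Nat.zero_add i, ← hGk i 0, ← Equiv.Perm.mul_apply, ← pow_succ]
  exact (eqv 0).trans (hyα (i + 1)) ((eqv 0).symm (hyα i))

theorem not_isExchange [Finite A] [Nontrivial A] (hf : Rigid f) {h : ℕ} {E H₀ : Set (Fin h → A)}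
    (hE : CoRelation f E) (hH₀ : IsExchange E H₀) : False := by
  classical
  choose idx hidx using fun X : {H // IsExchange E H} => exists_pull hf hE X.2
  let next : {H // IsExchange E H} → {H // IsExchange E H} := fun X => ⟨_, hidx X⟩
  obtain ⟨X, d, hd, hX⟩ : ∃ X, ∃ d, 0 < d ∧ next^[d] X = X := by
    obtain ⟨i, j, hij, heq⟩ :=
      Finite.exists_ne_map_eq_of_infinite fun i : ℕ => next^[i] ⟨H₀, hH₀⟩
    wlog hlt : i < j generalizing i j
    · exact this j i hij.symm heq.symm (by omega)
    refine ⟨next^[i] ⟨H₀, hH₀⟩, j - i, by omega, ?_⟩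
    rw [← iterate_add_apply, Nat.sub_add_cancel hlt.le]
    exact heq.symm
  let H : ℕ → Set (Fin h → A) := fun i => (next^[i] X).1
  let l : ℕ → Fin n := fun i => idx (next^[i] X)
  have hH : ∀ i, IsExchange E (H i) := fun i => (next^[i] X).2
  have hnext : ∀ i, H (i + 1) = pull f (l i) (H i) := by
    intro i
    simp only [H, l, iterate_succ_apply']
    rfl
  have hper : ∀ i, next^[i + d] X = next^[i] X := fun i => by rw [iterate_add_apply, hX]
  let q : ℕ → Type u := fun i => Quotient ⟨theta (H i), theta_equivalence (H i)⟩
  have hF : ∀ (i : ℕ) (c : Fin n → A), ∃ F : q (i + 1) → q i, Injective F ∧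
      ∀ Q, ∃ a, F Q = Quotient.mk _ (f (update c (l i) a)) := by
    intro i c
    have hex := exists_injective_quot hE (hH i) (l i) c
    rw [← hnext] at hex
    obtain ⟨F, hF, hF'⟩ := hex
    exact ⟨F, hF, fun Q => ⟨_, hF' Q⟩⟩
  have hcard : ∀ i, Nat.card (q (i + 1)) ≤ Nat.card (q i) := by
    intro i
    obtain ⟨F, hF, -⟩ := hF i fun _ => Classical.arbitrary A
    exact Nat.card_le_card_of_injective F hF
  have hcard' : ∀ i, Nat.card (q i) ≤ Nat.card (q (i + 1)) := by
    intro i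
    have hq : q i = q (i + d) := by simp only [q, H, hper]
    rw [hq]
    exact antitone_nat_of_succ_le (f := fun i => Nat.card (q i)) hcard (by omega : i + 1 ≤ i + d)
  have hsurj : ∀ i (c : Fin n → A) b, ∃ a, theta (H i) (f (update c (l i) a)) b := by
    intro i c b
    obtain ⟨F, hF, hF'⟩ := hF i c
    obtain ⟨Q, hQ⟩ := (hF.bijective_of_nat_card_le (hcard' i)).2 (Quotient.mk _ b)
    obtain ⟨a, ha⟩ := hF' Q
    exact ⟨a, Quotient.exact (ha.symm.trans hQ)⟩
  have hmap : ∀ i (x x' : Fin n → A), theta (H (i + 1)) (x (l i)) (x' (l i)) →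
      theta (H i) (f x) (f x') := by
    intro i x x' hxx
    rw [hnext] at hxx
    simpa using theta_of_theta_pull hE (hH i) (l i) (hsurj i) x x' hxx
  refine no_periodic_equivalences hf (fun i => theta (H i)) l d hd
    (fun i => theta_equivalence _) (fun i => by simp only [H, hper])
    (fun i => by simp only [l, hper]) (fun i a a' haa => ?_) hmap fun hall => ?_
  · simp only [hnext]
    refine theta_pull_of_theta hE (hH i) (l i) (fun _ => a) ?_
    have h1 := hmap i (update (fun _ => a) (l i) a') (fun _ => a')
      (by simpa using (theta_equivalence _).refl _)
    rw [update_eq_self_iff.2 rfl]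
    exact (theta_equivalence _).trans haa ((theta_equivalence _).symm h1)
  · obtain ⟨t, ht⟩ := (hH 0).nonempty
    have hh := hE.three_le
    let p : Fin h := ⟨0, by omega⟩
    let q : Fin h := ⟨1, by omega⟩
    have hpq : p ≠ q := by simp [p, q]
    have h1 := (hall (t p) (t q) t p).1 (by rwa [update_eq_self])
    refine hpq (hE.inj _ ((hH 0).subset h1) ?_)
    simp [hpq.symm]

/-- In a rigid algebra, no proper totally reflexive relation of arity at least three is
invariant. -/
theorem totallyReflexive_eq_univ [Fintype A] [Nontrivial A] (hf : Rigid f) {h : ℕ} (hh : 3 ≤ h)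
    (R : Set (Fin h → A)) (hi : InvRel f R) (hr : TotallyReflexive R) : R = Set.univ := by
  classical
  induction hk : Fintype.card A + 1 - h using Nat.strong_induction_on generalizing h with
  | _ k ih =>
  by_contra hne
  have hle : h ≤ Fintype.card A := by
    obtain ⟨x, hx⟩ := (Set.ne_univ_iff_exists_notMem R).1 hne
    have hinj : Injective x := by
      by_contra hni
      exact hx (hr x hni)
    simpa using Fintype.card_le_of_injective x hinj
  have hT : ∀ t, h < t → ∀ R : Set (Fin t → A), InvRel f R → TotallyReflexive R →
      R = Set.univ := fun t ht R hi hr =>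
    ih (Fintype.card A + 1 - t) (by omega) (by omega) R hi hr rfl
  obtain ⟨σ, -, hσi, hσr, -, hσu, hσe⟩ := exists_exchange hf (by omega) hT
    {x | ∀ π : Equiv.Perm (Fin h), x ∘ π ∈ R} (fun t ht π => hi (fun k => t k ∘ π) fun k => ht k π)
    (fun x hx π => hr _ fun hc => hx ((Injective.of_comp_iff' x π.bijective).1 hc))
    (fun π x hx π' => hx (π * π'))
    (fun hu => hne (Set.eq_univ_of_forall fun x => by
      have : x ∈ {x | ∀ π : Equiv.Perm (Fin h), x ∘ π ∈ R} := hu ▸ Set.mem_univ x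
      exact this 1))
  refine not_isExchange hf (E := σᶜ) (H₀ := σᶜ) ⟨hh, fun x hx => ?_, fun z hz => ?_⟩
    ⟨Set.nonempty_compl.2 hσu, subset_rfl, hσe⟩
  · by_contra hni
    exact hx (hσr x hni)
  · by_contra! hcon
    exact hz (hσi (fun k i => z i k) fun k => by simpa using hcon k)

theorem totallyReflexive_eq_univ_of_three_le_card [Fintype A] [Nontrivial A] (hf : Rigid f)
    {I : Type*} [Fintype I] (hI : 3 ≤ Fintype.card I) (R : Set (I → A)) (hi : InvRel f R)
    (hr : TotallyReflexive R) : R = Set.univ := by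
  have e := Fintype.equivFin I
  have := totallyReflexive_eq_univ hf hI {x | x ∘ e ∈ R} (fun t ht => hi (fun k => t k ∘ e) ht)
    (fun x hx => hr _ fun hc => hx ((Injective.of_comp_iff' x e.bijective).1 hc))
  refine Set.eq_univ_of_forall fun x => ?_
  have hx : x ∘ e.symm ∈ {x | x ∘ e ∈ R} := this ▸ Set.mem_univ _
  simpa [comp_assoc] using hx

theorem forall_of_diagonals₃ [Fintype A] [Nontrivial A] (hf : Rigid f) (P : A → A → A → Prop)
    (hP : ∀ x y z : Fin n → A, (∀ k, P (x k) (y k) (z k)) → P (f x) (f y) (f z))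
    (h01 : ∀ x z, P x x z) (h02 : ∀ x y, P x y x) (h12 : ∀ x y, P x y y) (x y z : A) :
    P x y z := by
  have := totallyReflexive_eq_univ hf le_rfl {x : Fin 3 → A | P (x 0) (x 1) (x 2)}
    (fun t ht => hP _ _ _ ht) (fun x hx => by
      by_contra hn
      refine hx fun i j hij => ?_
      have e01 : x 0 ≠ x 1 := fun h => hn (by simp only [Set.mem_ofPred_eq, h, h01])
      have e02 : x 0 ≠ x 2 := fun h => hn (by simp only [Set.mem_ofPred_eq, h, h02])
      have e12 : x 1 ≠ x 2 := fun h => hn (by simp only [Set.mem_ofPred_eq, h, h12])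
      fin_cases i <;> fin_cases j <;> simp_all)
  have hx : ![x, y, z] ∈ {x : Fin 3 → A | P (x 0) (x 1) (x 2)} := this ▸ Set.mem_univ _
  simpa using hx

theorem forall_of_diagonals₄ [Fintype A] [Nontrivial A] (hf : Rigid f) (P : A → A → A → A → Prop)
    (hP : ∀ x y z w : Fin n → A, (∀ k, P (x k) (y k) (z k) (w k)) → P (f x) (f y) (f z) (f w))
    (h01 : ∀ x y z, P x x y z) (h02 : ∀ x y z, P x y x z) (h03 : ∀ x y z, P x y z x)
    (h12 : ∀ x y z, P x y y z) (h13 : ∀ x y z, P x y z y) (h23 : ∀ x y z, P x y z z)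
    (x y z w : A) : P x y z w := by
  have := totallyReflexive_eq_univ hf (by norm_num) {x : Fin 4 → A | P (x 0) (x 1) (x 2) (x 3)}
    (fun t ht => hP _ _ _ _ ht) (fun x hx => by
      by_contra hn
      refine hx fun i j hij => ?_
      have e01 : x 0 ≠ x 1 := fun h => hn (by simp only [Set.mem_ofPred_eq, h, h01])
      have e02 : x 0 ≠ x 2 := fun h => hn (by simp only [Set.mem_ofPred_eq, h, h02])
      have e03 : x 0 ≠ x 3 := fun h => hn (by simp only [Set.mem_ofPred_eq, h, h03])
      have e12 : x 1 ≠ x 2 := fun h => hn (by simp only [Set.mem_ofPred_eq, h, h12])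
      have e13 : x 1 ≠ x 3 := fun h => hn (by simp only [Set.mem_ofPred_eq, h, h13])
      have e23 : x 2 ≠ x 3 := fun h => hn (by simp only [Set.mem_ofPred_eq, h, h23])
      fin_cases i <;> fin_cases j <;> simp_all)
  have hx : ![x, y, z, w] ∈ {x : Fin 4 → A | P (x 0) (x 1) (x 2) (x 3)} := this ▸ Set.mem_univ _
  simpa using hx

theorem eq_or_forall_of_refl_symm [Fintype A] [Nontrivial A] (hf : Rigid f) (r : A → A → Prop)
    (hr : ∀ x y : Fin n → A, (∀ k, r (x k) (y k)) → r (f x) (f y))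
    (refl : ∀ a, r a a) (symm : ∀ a b, r a b → r b a) :
    (∀ a b, r a b → a = b) ∨ ∀ a b, r a b := by
  by_contra! hcon
  obtain ⟨⟨a₀, b₀, hab, hne⟩, a₁, b₁, hn⟩ := hcon
  obtain ⟨σ, hσ, hσi, hσr, hσs, hσu, hσe⟩ := exists_exchange hf le_rfl
    (fun t ht R hi hr => totallyReflexive_eq_univ hf ht R hi hr)
    {x : Fin 2 → A | r (x 0) (x 1)} (fun t ht => hr _ _ ht)
    (fun x hx => by
      by_contra hn
      refine hx fun i j hij => ?_
      have e01 : x 0 ≠ x 1 := fun h => hn (by simp only [Set.mem_ofPred_eq, h, refl])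
      fin_cases i <;> fin_cases j <;> simp_all)
    (fun π x hx => by
      have h01 : π 0 ≠ π 1 := π.injective.ne (by decide)
      simp only [Set.mem_ofPred_eq, comp_apply] at hx ⊢
      generalize π 0 = i at *
      generalize π 1 = j at *
      fin_cases i <;> fin_cases j <;> simp_all)
    (fun hu => hn (by
      have : ![a₁, b₁] ∈ {x : Fin 2 → A | r (x 0) (x 1)} := hu ▸ Set.mem_univ _
      simpa using this))
  have heqv : Equivalence fun a b => ![a, b] ∈ σ := by
    refine ⟨fun a => ?_, fun {a b} h => ?_, fun {a b c} hab hbc => ?_⟩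
    · exact hσr _ fun hinj => absurd (@hinj 0 1 rfl) (by decide)
    · convert hσs (Equiv.swap 0 1) _ h
      funext i
      fin_cases i <;> simp
    · by_contra hac
      obtain ⟨i, hi⟩ := hσe _ hac b
      refine hi ?_
      fin_cases i
      · convert hbc using 1
        funext i
        fin_cases i <;> simp
      · convert hab using 1
        funext i
        fin_cases i <;> simp
  obtain heq | hfull := hf.con _ heqv (fun x y hxy => by
    convert hσi (fun k => ![x k, y k]) hxy using 1
    funext i
    fin_cases i <;> rfl)
  · exact hne (heq _ _ (hσ (by simpa using hab)))
  · refine hσu (Set.eq_univ_of_forall fun x => ?_)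
    convert hfull (x 0) (x 1)
    funext i
    fin_cases i <;> rfl

theorem endo_eq_self [Finite A] (hf : Rigid f) (μ : A → A)
    (hμ : ∀ x : Fin n → A, μ (f x) = f fun k => μ (x k)) (a : A) : μ a = a := by
  have hs : Surjective μ := fun b => hf.sub (Set.range μ) ⟨μ a, Set.mem_range_self _⟩
    (fun x hx => by
      choose y hy using hx
      exact ⟨f y, by rw [hμ, funext hy]⟩) b
  exact hf.aut (Equiv.ofBijective μ ⟨Finite.injective_iff_surjective.2 hs, hs⟩) hμ a

theorem exists_forall_of_pairs [Fintype A] [Nontrivial A] (hf : Rigid f) {κ : Type*} {h : ℕ}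
    (P : (κ → A) → (Fin h → A) → Prop)
    (hP : ∀ (u : Fin n → κ → A) (z : Fin n → Fin h → A), (∀ k, P (u k) (z k)) →
      P (fun i => f fun k => u k i) (fun i => f fun k => z k i))
    (hs : ∀ z : Fin 2 → A, ∃ u, ∀ ι : Fin h → Fin 2, P u (z ∘ ι)) : ∃ u, ∀ z, P u z :=
  exists_common_witness P hP 2 hs fun _ ht R hi hr => totallyReflexive_eq_univ hf ht R hi hr

/-- The only nonempty invariant binary relations are equality and the full relation. -/
theorem eq_or_forall [Fintype A] [Nontrivial A] (hf : Rigid f) (r : A → A → Prop)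
    (hr : ∀ x y : Fin n → A, (∀ k, r (x k) (y k)) → r (f x) (f y)) (hne : ∃ a b, r a b) :
    (∀ a b, r a b ↔ a = b) ∨ ∀ a b, r a b := by
  obtain ⟨a₀, b₀, hab⟩ := hne
  have h1 : ∀ a, ∃ b, r a b := hf.sub {a | ∃ b, r a b} ⟨a₀, b₀, hab⟩ (fun x hx => by
    choose y hy using hx
    exact ⟨f y, hr x y hy⟩)
  have h2 : ∀ b, ∃ a, r a b := hf.sub {b | ∃ a, r a b} ⟨b₀, a₀, hab⟩ (fun x hx => by
    choose y hy using hx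
    exact ⟨f y, hr y x hy⟩)
  obtain heq | hfull := eq_or_forall_of_refl_symm hf (fun a b => ∃ u, r u a ∧ r u b)
    (fun x y hxy => by
      choose u hu using hxy
      exact ⟨f u, hr u x fun k => (hu k).1, hr u y fun k => (hu k).2⟩)
    (fun a => (h2 a).imp fun u hu => ⟨hu, hu⟩)
    (fun a b hab => hab.imp fun u hu => ⟨hu.2, hu.1⟩)
  · left
    choose π hπ using h1
    have key : ∀ a, π a = a := endo_eq_self hf π fun x =>
      heq _ _ ⟨f x, hπ _, hr _ _ fun k => hπ _⟩
    refine fun a b => ⟨fun h => ?_, fun h => ?_⟩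
    · have := heq _ _ ⟨a, h, hπ a⟩
      rw [this, key]
    · have := hπ a
      rw [key] at this
      rwa [← h]
  · right
    obtain ⟨u, hu⟩ := exists_forall_of_pairs hf (κ := Fin 1) (h := 1)
      (fun u z => r (u 0) (z 0)) (fun u z huz => hr _ _ huz) (fun z => by
        obtain ⟨u, hu⟩ := hfull (z 0) (z 1)
        refine ⟨fun _ => u, fun ι => ?_⟩
        simp only [comp_apply]
        generalize ι 0 = i
        fin_cases i
        · exact hu.1
        · exact hu.2)
    refine hf.sub {u | ∀ x, r u x} ⟨u 0, fun x => hu fun _ => x⟩ fun x hx b => ?_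
    obtain ⟨y, rfl⟩ := hf.surjective b
    exact hr x y fun k => hx k _

/-- A binary homomorphism is a second projection or injective in its first argument. -/
theorem eq_snd_or_injective [Fintype A] [Nontrivial A] (hf : Rigid f) (μ : A → A → A)
    (hμ : ∀ x y : Fin n → A, μ (f x) (f y) = f fun k => μ (x k) (y k)) :
    (∀ x y, μ x y = y) ∨ ∀ y, Injective fun x => μ x y := by
  obtain heq | hfull := eq_or_forall hf (fun x x' => ∃ y, μ x y = μ x' y)
    (fun x x' hx => by
      choose y hy using hx
      exact ⟨f y, by rw [hμ, hμ, funext hy]⟩)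
    ⟨Classical.arbitrary A, Classical.arbitrary A, Classical.arbitrary A, rfl⟩
  · exact Or.inr fun y x x' hx => (heq x x').1 ⟨y, hx⟩
  · left
    obtain ⟨u, hu⟩ := exists_forall_of_pairs hf (κ := Fin 1) (h := 2)
      (fun u z => μ (z 0) (u 0) = μ (z 1) (u 0))
      (fun u z huz => by rw [hμ, hμ, funext huz]) (fun z => by
        obtain ⟨y, hy⟩ := hfull (z 0) (z 1)
        refine ⟨fun _ => y, fun ι => ?_⟩
        simp only [comp_apply]
        generalize ι 0 = i
        generalize ι 1 = j
        fin_cases i <;> fin_cases j <;> simp [hy])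
    obtain heq | hfull := eq_or_forall hf (fun y z => ∀ x, μ x y = z)
      (fun y z hyz x => by
        obtain ⟨x, rfl⟩ := hf.surjective x
        rw [hμ]
        exact congrArg f (funext fun k => hyz k _))
      ⟨u 0, μ (u 0) (u 0), fun x => hu ![x, u 0]⟩
    · exact fun x y => (heq y y).2 rfl x
    · obtain ⟨a, b, hab⟩ := exists_pair_ne A
      exact absurd ((hfull a a a).symm.trans (hfull a b a)) hab

/-- A rigid algebra has no Maltsev homomorphism satisfying `p a b (p b a b) = b`. -/
theorem no_malcev [Fintype A] [Nontrivial A] (hf : Rigid f) (p : A → A → A → A)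
    (hp : ∀ x y z : Fin n → A, p (f x) (f y) (f z) = f fun k => p (x k) (y k) (z k))
    (h1 : ∀ x y, p x x y = y) (h2 : ∀ x y, p x y y = x) (h3 : ∀ a b, p a b (p b a b) = b) :
    False := by
  have hS : ∀ x y z, p x y z = p z y x :=
    forall_of_diagonals₃ hf _ (fun x y z h => by rw [hp, hp, funext h])
      (by simp [h1, h2]) (by simp) (by simp [h1, h2])
  have hI : ∀ v a b, p (p v a b) b a = v :=
    forall_of_diagonals₃ hf _ (fun x y z h => by rw [hp, hp, funext h])
      (by simp [h1]) (fun b a => by rw [hS, h3]) (by simp [h2])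
  have hC : ∀ v a b c, p (p v a b) b c = p v a c :=
    forall_of_diagonals₄ hf _ (fun x y z w h => by rw [hp, hp, hp, funext h])
      (by simp [h1])
      (forall_of_diagonals₃ hf (fun b a c => p (p b a b) b c = p b a c)
        (fun x y z h => by rw [hp, hp, hp, funext h])
        (by simp [h1]) (by simp [h2]) (by simp [hI, h2]))
      (forall_of_diagonals₃ hf (fun c a b => p (p c a b) b c = p c a c)
        (fun x y z h => by rw [hp, hp, hp, funext h])
        (by simp [h1]) (by simp [h2]) (by simp [h2]))
      (by simp [h2]) (by simp [hI, h2]) (by simp [h2])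
  have hT : ∀ v a' a b, p v a' (p a' a b) = p v a b :=
    forall_of_diagonals₄ hf _ (fun x y z w h => by rw [hp, hp, hp, funext h])
      (by simp [h1])
      (forall_of_diagonals₃ hf (fun a a' b => p a a' (p a' a b) = p a a b)
        (fun x y z h => by rw [hp, hp, hp, funext h])
        (by simp [h1]) (by simp [h2]) (by simp [h1, h3]))
      (forall_of_diagonals₃ hf (fun b a' a => p b a' (p a' a b) = p b a b)
        (fun x y z h => by rw [hp, hp, hp, funext h])
        (by simp [h1]) (by simp [h2]) (by simp [h1]))
      (by simp [h1])
      (forall_of_diagonals₃ hf (fun v b a => p v b (p b a b) = p v a b)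
        (fun x y z h => by rw [hp, hp, hp, funext h])
        (by simp [h1]) (by simp [h1, h3]) (by simp [h1]))
      (by simp [h2])
  obtain ⟨o⟩ : Nonempty A := inferInstance
  by_cases hinj : Injective fun x => p (f fun _ => x) x o
  · obtain ⟨x, hx⟩ := Finite.injective_iff_surjective.1 hinj o
    have := hI (f fun _ => x) x o
    simp only at hx
    rw [hx, h1] at this
    exact hf.not_idempotent x this.symm
  · simp only [Injective, not_forall] at hinj
    obtain ⟨x, y, hxy, hne⟩ := hinj
    have hU : ∀ v, p v x y = p v (f fun _ => x) (f fun _ => y) := by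
      intro v
      have e1 : p (p v x y) (f fun _ => y) (p (f fun _ => y) y o) =
          p v (f fun _ => x) (p (f fun _ => x) x o) := by rw [hT, hT, hC]
      rw [← hxy] at e1
      rw [← hI (p v x y) (f fun _ => y) (p (f fun _ => x) x o), e1, hC]
    have hb : Injective fun v => p v x y := fun v v' hv => by
      simp only at hv
      rw [← hI v x y, hv, hI]
    have := hf.aut (Equiv.ofBijective _ (Finite.injective_iff_bijective.1 hb)) (fun t => by
      simp only [Equiv.ofBijective_apply]
      rw [hU, hp]) x
    simp only [Equiv.ofBijective_apply, h1] at this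
    exact hne this.symm

theorem no_quasigroup [Fintype A] [Nontrivial A] (hf : Rigid f) (φ : A → A → A)
    (hφ : ∀ x y : Fin n → A, φ (f x) (f y) = f fun k => φ (x k) (y k))
    (hl : ∀ y, Injective fun x => φ x y) (hr : ∀ x, Injective fun y => φ x y) : False := by
  classical
  have hid : ∀ x, φ x x = x := endo_eq_self hf (fun x => φ x x) fun x => hφ x x
  choose rd hrd using fun x y => Finite.injective_iff_surjective.1 (hl y) x
  choose ld hld using fun y z => Finite.injective_iff_surjective.1 (hr y) z
  simp only at hrd hld
  have hrdf : ∀ x y : Fin n → A, rd (f x) (f y) = f fun k => rd (x k) (y k) := fun x y =>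
    hl (f y) (by simp only [hrd, hφ])
  have hldf : ∀ x y : Fin n → A, ld (f x) (f y) = f fun k => ld (x k) (y k) := fun x y =>
    hr (f x) (by simp only [hld, hφ])
  obtain ⟨p, hp, hpf⟩ : ∃ p : A → A → A → A, (∀ x y z, p x y z = φ (rd x y) (ld y z)) ∧
      ∀ x y z : Fin n → A, p (f x) (f y) (f z) = f fun k => p (x k) (y k) (z k) :=
    ⟨fun x y z => φ (rd x y) (ld y z), fun _ _ _ => rfl, fun x y z => by
      simp only [hrdf, hldf, hφ]⟩
  have h1 : ∀ x y, p x x y = y := fun x y => by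
    have : rd x x = x := hl x (by simp only [hrd, hid])
    rw [hp, this, hld]
  have h2 : ∀ x y, p x y y = x := fun x y => by
    have : ld y y = y := hr y (by simp only [hld, hid])
    rw [hp, this, hrd]
  have hpinj : ∀ y z, Injective fun x => p x y z := fun y z x x' hx => by
    simp only [hp] at hx
    have := hl _ hx
    rw [← hrd x y, ← hrd x' y, this]
  have hS : ∀ x y z, p x y z = p z y x :=
    forall_of_diagonals₃ hf _ (fun x y z h => by rw [hpf, hpf, funext h])
      (by simp [h1, h2]) (by simp) (by simp [h1, h2])
  by_cases hcase : ∃ o x, o ≠ x ∧ p x o x = o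
  · obtain ⟨o, x, hox, hx⟩ := hcase
    obtain heq | hfull := eq_or_forall hf (fun o x => p x o x = o)
      (fun x y h => by rw [hpf, funext h]) ⟨o, x, hx⟩
    · exact hox ((heq o x).1 hx)
    · exact no_malcev hf p hpf h1 h2 fun a b => by rw [hfull a b, hfull b a]
  push Not at hcase
  choose nu hnu using fun o x => Finite.injective_iff_surjective.1 (hpinj o x) o
  simp only at hnu
  have hnuf : ∀ x y : Fin n → A, nu (f x) (f y) = f fun k => nu (x k) (y k) := fun x y =>
    hpinj (f x) (f y) (by simp only [hnu, hpf])
  have hnunu : ∀ o x, nu o (nu o x) = x := fun o x =>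
    hpinj o (nu o x) (by simp only [hnu]; rw [hS, hnu])
  let T := {ψ : A → A → A // ∀ x y : Fin n → A, ψ (f x) (f y) = f fun k => ψ (x k) (y k)}
  let N : T → T := fun ψ => ⟨fun o x => nu o (ψ.1 o x), fun x y => by simp only [ψ.2, hnuf]⟩
  let W : T → T := fun ψ => ⟨fun o x => ψ.1 x o, fun x y => ψ.2 y x⟩
  have hN : Involutive N := fun ψ => Subtype.ext (by simp only [N, hnunu])
  have hW : Involutive W := fun ψ => rfl
  have hfix : ∀ ψ : T, N ψ = ψ ↔ ψ = ⟨fun o _ => o, fun _ _ => rfl⟩ := by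
    intro ψ
    constructor
    · intro h
      refine Subtype.ext (funext fun o => funext fun x => ?_)
      have h' : nu o (ψ.1 o x) = ψ.1 o x := congrFun (congrFun (congrArg Subtype.val h) o) x
      by_contra hne
      refine hcase o (ψ.1 o x) (Ne.symm hne) ?_
      have := hnu o (ψ.1 o x)
      rwa [h'] at this
    · rintro rfl
      refine Subtype.ext (funext fun o => funext fun x => hpinj o o ?_)
      simp only [N, hnu, h1]
  obtain ⟨μ, hμ⟩ : ∃ μ, W μ = μ := by
    by_contra! hno
    have e1 := Equiv.Perm.card_fixedPoints_modEq (f := W) (p := 2) (n := 1)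
      (by rw [pow_one]; funext ψ; exact hW ψ)
    have e2 := Equiv.Perm.card_fixedPoints_modEq (f := N) (p := 2) (n := 1)
      (by rw [pow_one]; funext ψ; exact hN ψ)
    have c1 : Fintype.card (fixedPoints W) = 0 :=
      Fintype.card_eq_zero_iff.2 ⟨fun x => hno x.1 x.2⟩
    have c2 : Fintype.card (fixedPoints N) = 1 :=
      Fintype.card_eq_one_iff.2 ⟨⟨_, (hfix _).2 rfl⟩, fun y => Subtype.ext ((hfix _).1 y.2)⟩
    rw [c1] at e1
    rw [c2] at e2
    have := e1.symm.trans e2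
    revert this
    decide
  have hcomm : ∀ x y, μ.1 x y = μ.1 y x := fun x y =>
    congrFun (congrFun (congrArg Subtype.val hμ) y) x
  obtain hsnd | hinj := eq_snd_or_injective hf μ.1 μ.2
  · obtain ⟨a, b, hab⟩ := exists_pair_ne A
    exact hab (by rw [← hsnd b a, hcomm, hsnd])
  choose q hq using fun x y z => Finite.injective_iff_surjective.1 (hinj y) (μ.1 x z)
  simp only at hq
  refine no_malcev hf q (fun x y z => hinj (f y) ?_) (fun x y => hinj x ?_) (fun x y => hinj y ?_)
    fun a b => hinj b ?_
  · simp only [hq, μ.2]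
  · simp only [hq, hcomm]
  · simp only [hq]
  · simp only [hq]
    rw [hcomm, hq]

/-- Every nonempty invariant relation over the index type `I` in which no two coordinates
always agree is the full relation. -/
def FullRel (f : (Fin n → A) → A) (I : Type v) : Prop :=
  ∀ R : Set (I → A), InvRel f R → R.Nonempty → (∀ i i', i ≠ i' → ∃ x ∈ R, x i ≠ x i') →
    R = Set.univ

section FullRel

variable {J : Type v} [Fintype J]

theorem const_mem (hJ : ∀ (I : Type v) [Fintype I], Fintype.card I ≤ Fintype.card J → FullRel f I)
    {D : Set (J → A)} (hi : InvRel f D) (hne : D.Nonempty) (a : A) : (fun _ => a) ∈ D := by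
  classical
  let s : Setoid J := ⟨fun i j => ∀ x ∈ D, x i = x j, fun i x _ => rfl,
    fun h x hx => (h x hx).symm, fun h h' x hx => (h x hx).trans (h' x hx)⟩
  have := hJ (Quotient s) (Fintype.card_quotient_le s) {y | (fun j => y (Quotient.mk s j)) ∈ D}
    (fun t ht => hi (fun k j => t k (Quotient.mk s j)) ht) ?_ ?_
  · have h : (fun _ => a) ∈ {y : Quotient s → A | (fun j => y (Quotient.mk s j)) ∈ D} :=
      this ▸ Set.mem_univ _
    exact h
  · obtain ⟨x, hx⟩ := hne
    exact ⟨Quotient.lift x fun i j h => h x hx, by simpa using hx⟩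
  · intro i i' hii
    induction i using Quotient.inductionOn with | _ i =>
    induction i' using Quotient.inductionOn with | _ i' =>
    have hn : ¬ ∀ x ∈ D, x i = x i' := fun h => hii (Quotient.sound h)
    push Not at hn
    obtain ⟨x, hx, hxi⟩ := hn
    exact ⟨Quotient.lift x fun i j h => h x hx, by simpa using hx, by simpa using hxi⟩

/-- The hypothesis says that `φ` agrees with the `c`-th projection on the tuples that are
constant on `s`. -/
def ProjOn (φ : (J → A) → A) (s : Finset J) (c : J) : Prop :=
  ∀ x : J → A, (∀ i ∈ s, ∀ j ∈ s, x i = x j) → φ x = x c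

theorem exists_projOn [Nontrivial A]
    (hJ : ∀ (I : Type v) [Fintype I], Fintype.card I ≤ Fintype.card J → FullRel f I)
    {φ : (J → A) → A} (hφ : ∀ t : Fin n → J → A, φ (fun j => f fun k => t k j) = f fun k => φ (t k))
    {s : Finset J} (hs : s.card = 2) : ∃ c, ProjOn φ s c := by
  classical
  obtain ⟨a, b, hab, rfl⟩ := Finset.card_eq_two.1 hs
  let ρ : J → {j // j ≠ b} := fun j => if h : j = b then ⟨a, hab⟩ else ⟨j, h⟩
  have hρ : ∀ c : {j // j ≠ b}, ρ c.1 = c := fun c => by simp [ρ, c.2]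
  let G : Set (Option {j // j ≠ b} → A) := {y | φ (fun j => y (some (ρ j))) = y none}
  have hG : ∀ x : {j // j ≠ b} → A, (fun o : Option _ => o.elim (φ fun j => x (ρ j)) x) ∈ G :=
    fun x => rfl
  have hGi : InvRel f G := fun t ht => by
    have := hφ fun k j => t k (some (ρ j))
    refine this.trans (congrArg f (funext fun k => ht k))
  obtain ⟨a₀, a₁, ha⟩ := exists_pair_ne A
  by_contra! hno
  have hGu := hJ (Option {j // j ≠ b})
    (by
      rw [Fintype.card_option, Fintype.card_subtype_compl, Fintype.card_subtype_eq]
      have := Fintype.card_pos_iff.2 ⟨b⟩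
      omega) G hGi ⟨_, hG fun _ => a₀⟩ (by
    have hsome : ∀ c, ∃ y ∈ G, y none ≠ y (some c) := by
      intro c
      by_contra! hc
      refine hno c.1 fun x hx => ?_
      have hxρ : (fun j => x (ρ j).1) = x := by
        funext j
        by_cases hj : j = b
        · simp only [ρ, hj, dif_pos]
          exact hx _ (by simp) _ (by simp)
        · simp [ρ, hj]
      have := hc _ (hG fun j => x j.1)
      simpa only [Option.elim, hxρ] using this
    rintro (_ | c) (_ | c') hcc
    · exact absurd rfl hcc
    · exact hsome c'
    · exact (hsome c).imp fun y hy => ⟨hy.1, hy.2.symm⟩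
    · refine ⟨_, hG fun j => if j = c then a₀ else a₁, ?_⟩
      have : c' ≠ c := fun h => hcc (by rw [h])
      simpa [this] using ha)
  have h0 : ∀ z, (fun o : Option {j // j ≠ b} => o.elim z fun _ => a₀) ∈ G := fun z =>
    hGu ▸ Set.mem_univ _
  exact ha ((h0 a₀).symm.trans (h0 a₁))

theorem eq_proj_of_projOn [Nontrivial A]
    (hJ : ∀ (I : Type v) [Fintype I], Fintype.card I ≤ Fintype.card J → FullRel f I)
    {φ : (J → A) → A} (hφ : ∀ t : Fin n → J → A, φ (fun j => f fun k => t k j) = f fun k => φ (t k))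
    {s s' : Finset J} (hs : s.card = 2) (hs' : s'.card = 2) (hss : s ≠ s') {c : J}
    (hc : ProjOn φ s c) (hc' : ProjOn φ s' c) : ∀ x, φ x = x c := by
  classical
  obtain ⟨a₀, a₁, ha⟩ := exists_pair_ne A
  have key : ∀ s : Finset J, s.card = 2 → ProjOn φ s c → ∀ i j, i ≠ j → s ≠ {i, j} →
      ∃ x, φ x = x c ∧ x i ≠ x j := by
    intro s hs hc i j hij hsij
    have aux : ∀ i j, i ≠ j → i ∉ s → ∃ x, φ x = x c ∧ x i ≠ x j := by
      intro i j hij his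
      refine ⟨fun l => if l = i then a₀ else a₁, hc _ fun l hl l' hl' => ?_, ?_⟩
      · rw [if_neg (ne_of_mem_of_not_mem hl his), if_neg (ne_of_mem_of_not_mem hl' his)]
      · simpa [hij.symm] using ha
    by_cases hi : i ∈ s
    · by_cases hj : j ∈ s
      · refine absurd (Finset.eq_of_subset_of_card_le (fun l hl => ?_) ?_).symm hsij
        · rw [Finset.mem_insert, Finset.mem_singleton] at hl
          obtain rfl | rfl := hl <;> assumption
        · rw [hs, Finset.card_pair hij]
      · exact (aux j i hij.symm hj).imp fun x hx => ⟨hx.1, hx.2.symm⟩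
    · exact aux i j hij hi
  have := hJ J le_rfl {x | φ x = x c}
    (fun t ht => (hφ t).trans (congrArg f (funext fun k => ht k)))
    ⟨fun _ => a₀, hc _ fun _ _ _ _ => rfl⟩ (fun i j hij => by
      by_cases h : s = {i, j}
      · exact key s' hs' hc' i j hij fun h' => hss (h.trans h'.symm)
      · exact key s hs hc i j hij h)
  exact fun x => by
    have hx : x ∈ {x | φ x = x c} := this ▸ Set.mem_univ x
    exact hx

theorem exists_eq_proj [Fintype A] [Nontrivial A] (hf : Rigid f)
    (hJ : ∀ (I : Type v) [Fintype I], Fintype.card I ≤ Fintype.card J → FullRel f I)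
    (hJ2 : 2 ≤ Fintype.card J) {φ : (J → A) → A}
    (hφ : ∀ t : Fin n → J → A, φ (fun j => f fun k => t k j) = f fun k => φ (t k)) :
    ∃ c, ∀ x, φ x = x c := by
  classical
  by_contra! hno
  obtain h2 | h3 := hJ2.eq_or_lt
  · rw [← Finset.card_univ, eq_comm, Finset.card_eq_two] at h2
    obtain ⟨a, b, hab, huniv⟩ := h2
    have hall : ∀ j, j = a ∨ j = b := fun j => by
      have := Finset.mem_univ j
      simpa [huniv] using this
    have hμ : ∀ x y : Fin n → A, φ (fun j => if j = a then f x else f y) =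
        f fun k => φ fun j => if j = a then x k else y k := by
      intro x y
      rw [← hφ]
      congr 1
      funext j
      split_ifs <;> rfl
    have hx : ∀ x : J → A, (fun j => if j = a then x a else x b) = x := by
      intro x
      funext j
      obtain rfl | rfl := hall j <;> simp [hab.symm]
    obtain h | hl := eq_snd_or_injective hf (fun x y => φ fun j => if j = a then x else y) hμ
    · obtain ⟨x, hne⟩ := hno b
      refine hne ?_
      have := h (x a) (x b)
      simpa only [hx] using this
    obtain h | hr := eq_snd_or_injective hf (fun x y => φ fun j => if j = a then y else x)
      (fun x y => hμ y x)
    · obtain ⟨x, hne⟩ := hno a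
      refine hne ?_
      have := h (x b) (x a)
      simpa only [hx] using this
    exact no_quasigroup hf _ hμ hl hr
  · have hdisj : ∀ {s s' : Finset J}, s.card = 2 → s'.card = 2 → ∀ {c}, ProjOn φ s c →
        ProjOn φ s' c → s = s' := by
      intro s s' hs hs' c hc hc'
      by_contra hss
      obtain ⟨x, hx⟩ := hno c
      exact hx (eq_proj_of_projOn hJ hφ hs hs' hss hc hc' x)
    choose C hC using fun s : {s : Finset J // s.card = 2} => exists_projOn hJ hφ s.2
    have hCinj : Injective C := fun s s' h =>
      Subtype.ext (hdisj s.2 s'.2 (c := C s) (hC s) (by rw [h]; exact hC s'))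
    have hcard := Fintype.card_le_of_injective C hCinj
    rw [Fintype.card_finset_len, Nat.choose_two_right] at hcard
    have hJ3 : Fintype.card J = 3 := by
      by_contra hne
      obtain ⟨m, hm⟩ : ∃ m, Fintype.card J = m + 4 := ⟨Fintype.card J - 4, by omega⟩
      rw [hm, Nat.div_le_iff_le_mul_add_pred (by norm_num)] at hcard
      have : m + 4 - 1 = m + 3 := rfl
      rw [this] at hcard
      nlinarith
    rw [← Finset.card_univ, Finset.card_eq_three] at hJ3
    obtain ⟨a, b, c, hab, hac, hbc, huniv⟩ := hJ3
    have hall : ∀ j, j = a ∨ j = b ∨ j = c := fun j => by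
      have := Finset.mem_univ j
      simpa [huniv] using this
    have hmin : ∀ a b c : J, a ≠ b → a ≠ c → b ≠ c → (∀ j, j = a ∨ j = b ∨ j = c) →
        ProjOn φ {a, b} c := by
      intro a b c hab hac hbc hall
      obtain ⟨d, hd⟩ := exists_projOn hJ hφ (Finset.card_pair hab)
      by_cases hdc : d = c
      · rwa [← hdc]
      exfalso
      have hda : ProjOn φ {a, b} a := fun x hx => by
        rw [hd x hx]
        obtain rfl | rfl | rfl := hall d
        · rfl
        · exact hx _ (by simp) _ (by simp)
        · exact absurd rfl hdc
      have hdb : ProjOn φ {a, b} b := fun x hx => by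
        rw [hda x hx]
        exact hx _ (by simp) _ (by simp)
      have hne1 : ({a, b} : Finset J) ≠ {a, c} := fun h => by
        have : b ∈ ({a, c} : Finset J) := h ▸ by simp
        simp [hab.symm, hbc] at this
      have hne2 : ({a, b} : Finset J) ≠ {b, c} := fun h => by
        have : a ∈ ({b, c} : Finset J) := h ▸ by simp
        simp [hab, hac] at this
      have hne3 : ({a, c} : Finset J) ≠ {b, c} := fun h => by
        have : a ∈ ({b, c} : Finset J) := h ▸ by simp
        simp [hab, hac] at this
      have hforce : ∀ s : Finset J, s.card = 2 → {a, b} ≠ s → ProjOn φ s c := by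
        intro s hs hne
        obtain ⟨e, he⟩ := exists_projOn hJ hφ hs
        obtain rfl | rfl | rfl := hall e
        · exact absurd (hdisj (Finset.card_pair hab) hs hda he) hne
        · exact absurd (hdisj (Finset.card_pair hab) hs hdb he) hne
        · exact he
      exact hne3 (hdisj (Finset.card_pair hac) (Finset.card_pair hbc)
        (hforce _ (Finset.card_pair hac) hne1) (hforce _ (Finset.card_pair hbc) hne2))
    let p : A → A → A → A := fun x y z => φ fun j => if j = a then x else if j = b then y else z
    have hp : ∀ x y z : Fin n → A, p (f x) (f y) (f z) = f fun k => p (x k) (y k) (z k) := by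
      intro x y z
      simp only [p]
      rw [← hφ]
      congr 1
      funext j
      split_ifs <;> rfl
    have h1 : ∀ x y, p x x y = y := fun x y => by
      refine (hmin a b c hab hac hbc hall _ ?_).trans ?_
      · simp
      · simp [hac.symm, hbc.symm]
    have h2 : ∀ x y, p x y y = x := fun x y => by
      refine (hmin b c a hbc hab.symm hac.symm (fun j => by have := hall j; tauto) _ ?_).trans ?_
      · simp [hab.symm, hac.symm]
      · simp
    have h3 : ∀ x y, p x y x = y := fun x y => by
      refine (hmin a c b hac hab hbc.symm (fun j => by have := hall j; tauto) _ ?_).trans ?_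
      · simp [hac.symm, hbc.symm]
      · simp [hab.symm]
    exact no_malcev hf p hp h1 h2 fun a b => by rw [h3, h3]

end FullRel

theorem fullRel_of_card_le_two [Fintype A] [Nontrivial A] (hf : Rigid f) {I : Type v} [Fintype I]
    (hI : Fintype.card I ≤ 2) : FullRel f I := by
  classical
  rintro R hi ⟨x₀, hx₀⟩ hirr
  refine Set.eq_univ_of_forall fun x => ?_
  obtain h0 | h1 | h2 : Fintype.card I = 0 ∨ Fintype.card I = 1 ∨ Fintype.card I = 2 := by omega
  · have := Fintype.card_eq_zero_iff.1 h0
    rwa [Subsingleton.elim x x₀]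
  · obtain ⟨i, hall⟩ := Fintype.card_eq_one_iff.1 h1
    obtain ⟨y, hy, hyx⟩ := hf.sub {a | ∃ y ∈ R, y i = a} ⟨_, x₀, hx₀, rfl⟩ (fun z hz => by
      choose y hy hyz using hz
      exact ⟨_, hi y hy, congrArg f (funext hyz)⟩) (x i)
    have : y = x := funext fun j => by rw [hall j, hyx]
    rwa [← this]
  · rw [← Finset.card_univ, Finset.card_eq_two] at h2
    obtain ⟨a, b, hab, huniv⟩ := h2
    have hall : ∀ j, j = a ∨ j = b := fun j => by
      have := Finset.mem_univ j
      simpa [huniv] using this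
    obtain heq | hfull := eq_or_forall hf (fun c d => ∃ y ∈ R, y a = c ∧ y b = d)
      (fun c d hcd => by
        choose y hy hyc hyd using hcd
        exact ⟨_, hi y hy, congrArg f (funext hyc), congrArg f (funext hyd)⟩)
      ⟨_, _, x₀, hx₀, rfl, rfl⟩
    · obtain ⟨y, hy, hyab⟩ := hirr a b hab
      exact absurd ((heq _ _).1 ⟨y, hy, rfl, rfl⟩) hyab
    · obtain ⟨y, hy, hya, hyb⟩ := hfull (x a) (x b)
      have : y = x := funext fun j => by
        obtain rfl | rfl := hall j <;> assumption
      rwa [← this]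

section Induction

variable {I : Type v} [Fintype I] [DecidableEq I]

/-- If no coordinate is a function of the other ones, the relation is full. -/
theorem eq_univ_of_forall_exists [Fintype A] [Nontrivial A] (hf : Rigid f)
    (hI : 3 ≤ Fintype.card I)
    (ih : ∀ (J : Type v) [Fintype J], Fintype.card J < Fintype.card I → FullRel f J)
    {R : Set (I → A)} (hi : InvRel f R) (hR : ∀ i, ∃ x, ∀ z, update x i z ∈ R) :
    R = Set.univ := by
  have hlt : ∀ i : I, Fintype.card {j // j ≠ i} < Fintype.card I := fun i =>
    Fintype.card_subtype_lt (x := i) (by simp)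
  have hconst : ∀ i a z, update (fun _ => a) i z ∈ R := by
    intro i a
    obtain ⟨y, hy, hya⟩ := const_mem (f := f) (J := {j // j ≠ i})
      (fun K _ hK => ih K (hK.trans_lt (hlt i)))
      (D := {y | ∃ x : I → A, (∀ z, update x i z ∈ R) ∧ ∀ j, x j.1 = y j})
      (fun t ht => by
        choose x hx hxt using ht
        refine ⟨fun j => f fun k => x k j, fun z => ?_, fun j =>
          congrArg f (funext fun k => hxt k j)⟩
        obtain ⟨w, rfl⟩ := hf.surjective z
        convert hi _ fun k => hx k (w k) using 1
        funext j
        by_cases hj : j = i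
        · subst hj; simp
        · simp [hj])
      (by
        obtain ⟨x, hx⟩ := hR i
        exact ⟨_, x, hx, fun _ => rfl⟩) a
    intro z
    convert hy z using 1
    funext j
    by_cases hj : j = i
    · subst hj; simp
    · simp [hj, hya ⟨j, hj⟩]
  refine totallyReflexive_eq_univ_of_three_le_card hf hI R hi fun x hx => ?_
  simp only [Injective, not_forall] at hx
  obtain ⟨a, b, hxab, hab⟩ := hx
  let ρ : I → {j // j ≠ b} := fun j => if h : j = b then ⟨a, hab⟩ else ⟨j, h⟩
  obtain ⟨a₀, a₁, ha⟩ := exists_pair_ne A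
  have hone : ∀ j j' : {j // j ≠ b}, j ≠ j' → j.1 ≠ a →
      ∃ y : {j // j ≠ b} → A, (fun i => y (ρ i)) ∈ R ∧ y j ≠ y j' := by
    intro j j' hjj hja
    refine ⟨fun c => if c = j then a₁ else a₀, ?_, by simpa [hjj.symm] using ha.symm⟩
    convert hconst j.1 a₀ a₁ using 1
    funext i
    by_cases hib : i = b
    · have hij : i ≠ j.1 := fun h => j.2 (h.symm.trans hib)
      have : (⟨a, hab⟩ : {j // j ≠ b}) ≠ j := fun h => hja (by rw [← h])
      simp only [ρ, hib, dif_pos, if_neg this]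
      rw [update_of_ne (hib ▸ hij)]
    · simp [ρ, hib, update_apply, Subtype.ext_iff]
  have := ih {j // j ≠ b} (hlt b) {y | (fun i => y (ρ i)) ∈ R}
    (fun t ht => hi (fun k i => t k (ρ i)) ht)
    ⟨fun _ => a₀, by simpa using hconst b a₀ a₀⟩ (fun j j' hjj => by
      by_cases hja : j.1 = a
      · obtain ⟨y, hy, hyj⟩ := hone j' j hjj.symm fun h => hjj (Subtype.ext (hja.trans h.symm))
        exact ⟨y, hy, hyj.symm⟩
      · exact hone j j' hjj hja)
  have hx : (fun j : {j // j ≠ b} => x j.1) ∈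
      {y : {j // j ≠ b} → A | (fun i => y (ρ i)) ∈ R} := this ▸ Set.mem_univ _
  have hxρ : (fun j => x (ρ j).1) = x := by
    funext j
    by_cases hj : j = b
    · simp [ρ, hj, hxab]
    · simp [ρ, hj]
  rwa [Set.mem_ofPred_eq, hxρ] at hx

/-- If some coordinate is a function of the other ones, two coordinates always agree. -/
theorem exists_ne_of_unique [Fintype A] [Nontrivial A] (hf : Rigid f) (hI : 3 ≤ Fintype.card I)
    (ih : ∀ (J : Type v) [Fintype J], Fintype.card J < Fintype.card I → FullRel f J)
    {R : Set (I → A)} (hi : InvRel f R) (hne : R.Nonempty)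
    (hirr : ∀ i i', i ≠ i' → ∃ x ∈ R, x i ≠ x i') (i : I) :
    ∃ x ∈ R, ∃ x' ∈ R, (∀ j, j ≠ i → x j = x' j) ∧ x i ≠ x' i := by
  by_contra! huniq
  have hcard : Fintype.card {j // j ≠ i} + 1 = Fintype.card I := by
    rw [Fintype.card_subtype_compl, Fintype.card_subtype_eq]
    omega
  have hproj : ∀ y : {j // j ≠ i} → A, ∃ x ∈ R, ∀ j, x j.1 = y j := by
    have := ih {j // j ≠ i} (by omega) {y | ∃ x ∈ R, ∀ j, x j.1 = y j}
      (fun t ht => by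
        choose x hx hxt using ht
        exact ⟨_, hi x hx, fun j => congrArg f (funext fun k => hxt k j)⟩)
      (by
        obtain ⟨x, hx⟩ := hne
        exact ⟨_, x, hx, fun _ => rfl⟩)
      (fun j j' hjj => by
        obtain ⟨x, hx, hxj⟩ := hirr j j' fun h => hjj (Subtype.ext h)
        exact ⟨fun j => x j.1, ⟨x, hx, fun _ => rfl⟩, hxj⟩)
    intro y
    have hy : y ∈ {y : {j // j ≠ i} → A | ∃ x ∈ R, ∀ j, x j.1 = y j} := this ▸ Set.mem_univ y
    exact hy
  choose φ hφR hφ using hproj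
  have hφi : ∀ x ∈ R, φ (fun j => x j.1) i = x i := fun x hx =>
    huniq _ (hφR _) x hx fun j hj => hφ _ ⟨j, hj⟩
  obtain ⟨c, hc⟩ := exists_eq_proj hf (J := {j // j ≠ i})
    (fun K _ hK => ih K (by omega)) (by omega) (φ := fun y => φ y i) (fun t => by
      have := hφi _ (hi (fun k => φ (t k)) fun k => hφR _)
      simpa only [hφ] using this)
  obtain ⟨x, hx, hxi⟩ := hirr i c.1 c.2.symm
  exact hxi ((hφi x hx).symm.trans (hc _))

end Induction

theorem fullRel [Fintype A] [Nontrivial A] (hf : Rigid f) (I : Type v) [Fintype I] :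
    FullRel f I := by
  classical
  induction hk : Fintype.card I using Nat.strong_induction_on generalizing I with
  | _ k ih =>
  subst hk
  obtain h2 | h3 := Nat.lt_or_ge 2 (Fintype.card I) |>.symm
  · exact fullRel_of_card_le_two hf h2
  intro R hi hne hirr
  have ih' : ∀ (J : Type v) [Fintype J], Fintype.card J < Fintype.card I → FullRel f J :=
    fun J _ hJ => ih _ hJ J rfl
  refine eq_univ_of_forall_exists hf h3 ih' hi fun i => ?_
  obtain ⟨x, hx, x', hx', hxx, hxi⟩ := exists_ne_of_unique hf h3 ih' hi hne hirr i
  have hupd : ∀ (t : Fin n → I → A) (z : Fin n → A),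
      update (fun j => f fun k => t k j) i (f z) =
        fun j => f fun k => update (t k) i (z k) j := by
    intro t z
    funext j
    by_cases hj : j = i
    · subst hj; simp
    · simp [hj]
  obtain heq | hfull := eq_or_forall hf
    (fun z z' => ∃ x, update x i z ∈ R ∧ update x i z' ∈ R)
    (fun z z' h => by
      choose x hx using h
      refine ⟨fun j => f fun k => x k j, ?_, ?_⟩
      · rw [hupd]
        exact hi _ fun k => (hx k).1
      · rw [hupd]
        exact hi _ fun k => (hx k).2)
    ⟨x i, x i, x, by simpa using hx, by simpa using hx⟩
  · refine absurd ((heq (x i) (x' i)).1 ⟨x, by simpa using hx, ?_⟩) hxi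
    convert hx' using 1
    funext j
    by_cases hj : j = i
    · subst hj; simp
    · simp [hj, hxx j hj]
  · obtain ⟨u, hu⟩ := exists_forall_of_pairs hf (κ := I) (h := 1)
      (fun u z => update u i (z 0) ∈ R)
      (fun u z huz => by
        rw [hupd]
        exact hi _ huz) (fun z => by
        obtain ⟨u, hu⟩ := hfull (z 0) (z 1)
        refine ⟨u, fun ι => ?_⟩
        simp only [comp_apply]
        generalize ι 0 = i
        fin_cases i
        · exact hu.1
        · exact hu.2)
    exact ⟨u, fun z => hu fun _ => z⟩

end Rigid

theorem cloneGen_isClone {A : Type u} (F : Set (Ops A)) : IsClone (cloneGen F) :=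
  ⟨fun n i _ hC => hC.1.1 n i, fun n m f g hf hg C hC =>
    hC.1.2 n m f g (hf C hC) fun i => hg i C hC⟩

theorem subset_cloneGen {A : Type u} (F : Set (Ops A)) : F ⊆ cloneGen F :=
  fun _ hx _ hC => hC.2 hx

theorem pol_isClone {A : Type u} {k : ℕ} (ρ : Set (Fin k → A)) : IsClone (Pol ρ) :=
  ⟨fun _ i _ ht => ht i, fun _ _ _ g hf hg t ht => hf (fun i j => g i fun l => t l j) fun i =>
    hg i t ht⟩

theorem preserves_of_cloneGen_eq_univ {A : Type u} {f : Ops A} (hf : cloneGen {f} = Set.univ)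
    {k : ℕ} {ρ : Set (Fin k → A)} (hρ : Preserves f.2 ρ) (g : A → A) {x : Fin k → A}
    (hx : x ∈ ρ) : (fun i => g (x i)) ∈ ρ := by
  have h : (⟨0, fun y => g (y 0)⟩ : Ops A) ∈ cloneGen {f} := hf ▸ Set.mem_univ _
  exact h (Pol ρ) ⟨pol_isClone ρ, Set.singleton_subset_iff.2 hρ⟩ (fun _ => x) fun _ => hx

/-- The operations of each arity in the generated clone form an invariant relation, which is full
when the algebra is rigid. -/
theorem Rigid.cloneGen_eq_univ {A : Type u} [Fintype A] [Nontrivial A] {f : Ops A}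
    (hf : Rigid f.2) : cloneGen {f} = Set.univ := by
  classical
  have hcl := cloneGen_isClone {f}
  refine Set.eq_univ_of_forall fun ⟨m, F⟩ => ?_
  have := hf.fullRel (Fin (m + 1) → A) {x | (⟨m, x⟩ : Ops A) ∈ cloneGen {f}}
    (fun t ht => hcl.2 f.1 m f.2 t (subset_cloneGen _ rfl) ht) ⟨_, hcl.1 m 0⟩
    (fun x y hxy => by
      obtain ⟨i, hi⟩ := Function.ne_iff.1 hxy
      exact ⟨_, hcl.1 m i, hi⟩)
  have hF : F ∈ {x | (⟨m, x⟩ : Ops A) ∈ cloneGen {f}} := this ▸ Set.mem_univ F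
  exact hF

/-- **Rousseau's Theorem on Sheffer functions.**  Let `A` be a finite set with
`|A| ≥ 2`.  An operation `f` on `A` is a Sheffer function (the singleton `{f}` is
complete) if and only if `f` preserves no relation of the following kinds: the graph of
a fixed-point-free permutation of `A` all of whose cycles have the same prime length;
a nontrivial equivalence relation on `A`; a nontrivial unary relation on `A`
(a nonempty proper subset of `A`). -/
theorem rousseau_sheffer {A : Type u} [Fintype A] (hA : 2 ≤ Fintype.card A) (f : Ops A) :
    cloneGen {f} = Set.univ ↔
      ((∀ π : Equiv.Perm A, (∀ a, π a ≠ a) → (∃ p : ℕ, p.Prime ∧ ∀ a, (π ^ p) a = a) →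
          ¬ Preserves f.2 {x : Fin 2 → A | x 1 = π (x 0)}) ∧
      (∀ r : A → A → Prop, Equivalence r → r ≠ Eq → (∃ a b, ¬ r a b) →
          ¬ Preserves f.2 {x : Fin 2 → A | r (x 0) (x 1)}) ∧
      (∀ B : Set A, B.Nonempty → B ≠ Set.univ →
          ¬ Preserves f.2 {x : Fin 1 → A | x 0 ∈ B})) := by
  classical
  have : Nontrivial A := Fintype.one_lt_card_iff_nontrivial.1 hA
  constructor
  · refine fun hf => ⟨fun π hπ _ hP => ?_, fun r hr hne ⟨c, d, hcd⟩ hP => ?_,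
      fun B ⟨b, hb⟩ hBu hP => ?_⟩
    · obtain ⟨a⟩ : Nonempty A := inferInstance
      exact hπ a (preserves_of_cloneGen_eq_univ hf hP (fun _ => a) (x := ![a, π a]) rfl).symm
    · obtain ⟨a, b, hab, hrab⟩ : ∃ a b, a ≠ b ∧ r a b := by
        by_contra! h
        refine hne (funext fun a => funext fun b => propext ⟨fun hab => ?_, fun hab => ?_⟩)
        · by_contra hn
          exact h a b hn hab
        · rw [hab]
          exact hr.refl b
      have := preserves_of_cloneGen_eq_univ hf hP (fun x => if x = a then c else d)
        (x := ![a, b]) hrab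
      simp [hab.symm] at this
      exact hcd this
    · obtain ⟨c, hc⟩ := (Set.ne_univ_iff_exists_notMem B).1 hBu
      exact hc (preserves_of_cloneGen_eq_univ hf hP (fun _ => c) (x := fun _ => b) hb)
  · rintro ⟨haut, hcon, hsub⟩
    have hsub' : ∀ B : Set A, B.Nonempty → (∀ x, (∀ k, x k ∈ B) → f.2 x ∈ B) → ∀ a, a ∈ B := by
      intro B hB hBf a
      by_contra ha
      exact hsub B hB (fun h => ha (h ▸ Set.mem_univ a)) fun t ht => hBf _ ht
    refine Rigid.cloneGen_eq_univ ⟨hsub', fun r hr hrf => ?_, fun π hπ => ?_⟩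
    · by_contra! h
      obtain ⟨⟨a, b, hab, hne⟩, c, d, hcd⟩ := h
      exact hcon r hr (fun h => hne (h ▸ hab)) ⟨c, d, hcd⟩ fun t ht => hrf _ _ ht
    · by_contra! hne
      have hπ1 : orderOf π ≠ 1 := fun h => by
        obtain ⟨a, ha⟩ := hne
        rw [orderOf_eq_one_iff] at h
        exact ha (by rw [h]; rfl)
      obtain ⟨p, hp, m, hm⟩ := Nat.exists_prime_and_dvd hπ1
      have hpow : ∀ e : ℕ, ∀ x, (π ^ e) (f.2 x) = f.2 fun k => (π ^ e) (x k) := by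
        intro e
        induction e with
        | zero => intro x; rfl
        | succ e ih => intro x; simp only [pow_succ', Equiv.Perm.mul_apply, ih, hπ]
      have hτp : (π ^ m) ^ p = 1 := by rw [← pow_mul, Nat.mul_comm, ← hm, pow_orderOf_eq_one]
      refine haut (π ^ m) (fun a ha => ?_) ⟨p, hp, fun a => by rw [hτp]; rfl⟩ fun t ht => ?_
      · have hfix := hsub' {a | (π ^ m) a = a} ⟨a, ha⟩ fun x hx => by
          rw [Set.mem_ofPred_eq, hpow]
          exact congrArg f.2 (funext hx)
        have h1 : π ^ m = 1 := Equiv.ext hfix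
        have h2 := orderOf_dvd_of_pow_eq_one h1
        have h3 := orderOf_pos π
        rw [hm] at h2 h3
        have h4 := Nat.le_of_dvd (Nat.pos_of_mul_pos_left h3) h2
        have h5 := hp.two_le
        have h6 : 0 < m := Nat.pos_of_mul_pos_left h3
        nlinarith
      · change f.2 _ = (π ^ m) (f.2 _)
        rw [hpow]
        exact congrArg f.2 (funext ht)
end

section
/- Waldhauser's Theorem on small minimal majority clones. There exist no minimal majority clones containing exactly 2 majority operations and none containing exactly 4 majority operations; that is, if C is a minimal clone on a set A generated by a majority operation, then the number of majority operations belonging to C is neither 2 nor 4. -/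
universe u

/-- A majority operation: a ternary operation satisfying
`m(x,x,y) = m(x,y,x) = m(y,x,x) = x`. -/
def IsMajority {A : Type u} (f : (Fin 3 → A) → A) : Prop :=
  ∀ x y : A, f ![x, x, y] = x ∧ f ![x, y, x] = x ∧ f ![y, x, x] = x

/-- The set of majority operations belonging to a clone `C`. -/
def majorityOpsIn {A : Type u} (C : Set (Ops A)) : Set ((Fin 3 → A) → A) :=
  {g | IsMajority g ∧ (⟨2, g⟩ : Ops A) ∈ C}

set_option autoImplicit false

section
variable {A : Type u}

/-- Composition of ternary operations. -/
def comp3 (h a b c : (Fin 3 → A) → A) : (Fin 3 → A) → A := fun t => h ![a t, b t, c t]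

/-- The ternary projections. -/
def proj3 (i : Fin 3) : (Fin 3 → A) → A := fun t => t i

local notation "X" => proj3 (A := A) 0
local notation "Y" => proj3 (A := A) 1
local notation "Z" => proj3 (A := A) 2

theorem comp3_comp3 (h a b c p q r : (Fin 3 → A) → A) :
    comp3 (comp3 h a b c) p q r = comp3 h (comp3 a p q r) (comp3 b p q r) (comp3 c p q r) := rfl

theorem comp3_proj3_zero (p q r : (Fin 3 → A) → A) : comp3 (proj3 0) p q r = p := rfl
theorem comp3_proj3_one (p q r : (Fin 3 → A) → A) : comp3 (proj3 1) p q r = q := rfl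
theorem comp3_proj3_two (p q r : (Fin 3 → A) → A) : comp3 (proj3 2) p q r = r := rfl

theorem comp3_self (h : (Fin 3 → A) → A) : comp3 h X Y Z = h := by
  funext t
  exact congrArg h (by ext i; fin_cases i <;> rfl)

theorem comp3_eq {h a b c r : (Fin 3 → A) → A} (e : comp3 h a b c = r)
    (p q s : (Fin 3 → A) → A) :
    comp3 h (comp3 a p q s) (comp3 b p q s) (comp3 c p q s) = comp3 r p q s := by
  rw [← e, comp3_comp3]

theorem comp3_ne_of_rot_of_swap {f f' : (Fin 3 → A) → A}
    (m : ∀ a b, comp3 f a a b = a ∧ comp3 f a b a = a ∧ comp3 f b a a = a)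
    (cf : ∀ a b c, comp3 f a b c = comp3 f b c a)
    (sf : ∀ a b c, comp3 f a b c = comp3 f' b a c)
    (ne : f ≠ f') : comp3 f X f f' ≠ f ∧ comp3 f X f f' ≠ f' := by
  have := comp3_self f
  have := comp3_self f'
  constructor
  · intro e
    have e1 := comp3_eq e f X f'
    have e2 := comp3_eq e X Z Y
    have e3 := comp3_eq e Y Z X
    have e4 := comp3_eq e Z Y X
    grind [comp3_proj3_zero, comp3_proj3_one, comp3_proj3_two]
  · intro e
    have e1 := comp3_eq e f X f'
    have e2 := comp3_eq e X Z Y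
    have e3 := comp3_eq e Y Z X
    have e4 := comp3_eq e Z Y X
    grind [comp3_proj3_zero, comp3_proj3_one, comp3_proj3_two]

theorem false_of_rot_of_swap {f f' g g' : (Fin 3 → A) → A}
    (mf : ∀ a b, comp3 f a a b = a ∧ comp3 f a b a = a ∧ comp3 f b a a = a)
    (cf : ∀ a b c, comp3 f a b c = comp3 f b c a)
    (sf : ∀ a b c, comp3 f a b c = comp3 f' b a c)
    (cg : ∀ a b c, comp3 g a b c = comp3 g b c a)
    (sg : ∀ a b c, comp3 g a b c = comp3 g' b a c)
    (nf : f ≠ f') (ng : g ≠ g')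
    (e : comp3 f X f f' = g)
    (k : comp3 f X g g' = f ∨ comp3 f X g g' = f' ∨ comp3 f X g g' = g ∨
      comp3 f X g g' = g') : False := by
  have := comp3_self f
  have := comp3_self f'
  have := comp3_self g
  have := comp3_self g'
  have a2 := comp3_eq e X Z Y
  have a3 := comp3_eq e Y Z X
  have a4 := comp3_eq e Z Y X
  have a5 := comp3_eq e Z X Y
  have a6 := comp3_eq e Y X Z
  have b1 := comp3_eq e X f f'
  have b2 := comp3_eq e X f' f
  have b3 := comp3_eq e X g g'
  have b5 := comp3_eq e X g' g
  have b4 := comp3_eq e g X g'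
  rcases k with k | k | k | k
  all_goals
    have c2 := comp3_eq k X Z Y
    have c3 := comp3_eq k Y Z X
    have c4 := comp3_eq k Z Y X
    have c5 := comp3_eq k Z X Y
    have c6 := comp3_eq k Y X Z
    have d := comp3_eq k f X f'
    grind [comp3_proj3_zero, comp3_proj3_one, comp3_proj3_two]

/-- The shape of the last case: four majority operations, one of which (`s`) is totally
symmetric, while `h₁` is symmetric in its last two variables and `h₂`, `h₃` are its
cyclic shifts. -/
structure ThreeOne (s h₁ h₂ h₃ : (Fin 3 → A) → A) : Prop where
  maj_s : ∀ a b, comp3 s a a b = a ∧ comp3 s a b a = a ∧ comp3 s b a a = a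
  maj_h : ∀ a b, comp3 h₁ a a b = a ∧ comp3 h₁ a b a = a ∧ comp3 h₁ b a a = a
  swap_s : ∀ a b d, comp3 s a b d = comp3 s b a d
  rot_s : ∀ a b d, comp3 s a b d = comp3 s b d a
  swap_h : ∀ a b d, comp3 h₁ a b d = comp3 h₁ a d b
  rot_two : ∀ a b d, comp3 h₂ a b d = comp3 h₁ b d a
  rot_three : ∀ a b d, comp3 h₃ a b d = comp3 h₁ d a b
  ne_one : s ≠ h₁
  ne_two : s ≠ h₂
  ne_three : s ≠ h₃
  one_ne_two : h₁ ≠ h₂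
  one_ne_three : h₁ ≠ h₃
  two_ne_three : h₂ ≠ h₃
  inner : comp3 s s Y Z = h₁

/-! The following lemmas exclude the possible values of `s(X, s, h₂)` (inner),
`s(X, Y, h₁)` (outer) and `s(X, h₂, h₃)` (shifts) in a `ThreeOne` configuration. -/

theorem ThreeOne.false_of_inner_symm {s h₁ h₂ h₃ : (Fin 3 → A) → A} (T : ThreeOne s h₁ h₂ h₃)
    (ea : comp3 s X s h₂ = s) : False := by
  obtain ⟨h_ms, h_mh, h_sw, h_ro, h_sh, h_r2, h_r3, n1, n2, n3, n12, n13, n23, e⟩ := T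
  have := comp3_self s
  have := comp3_self h₁
  have := comp3_self h₂
  have := comp3_self h₃
  have := comp3_comp3 s Y Z s Z X Y
  have := comp3_comp3 s X Y s Y s X
  have := comp3_comp3 s X s h₂ Y Z X
  have := comp3_comp3 h₁ X Y s X s Y
  have := comp3_comp3 h₁ X s h₂ X Z Y
  have := comp3_comp3 s Y Z s X s h₂
  grind [comp3_proj3_zero, comp3_proj3_one, comp3_proj3_two]

theorem ThreeOne.false_of_inner_one {s h₁ h₂ h₃ : (Fin 3 → A) → A} (T : ThreeOne s h₁ h₂ h₃)
    (ea : comp3 s X s h₂ = h₁) : False := by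
  obtain ⟨h_ms, h_mh, h_sw, h_ro, h_sh, h_r2, h_r3, n1, n2, n3, n12, n13, n23, e⟩ := T
  have := comp3_self s
  have := comp3_self h₁
  have := comp3_self h₂
  have := comp3_self h₃
  have := comp3_comp3 s Y Z s Y X Z
  have := comp3_comp3 s X Z s X Z s
  have := comp3_comp3 s X s h₂ Y X Z
  have := comp3_comp3 s X s h₂ Z X Y
  have := comp3_comp3 s X s h₂ Z Y X
  have := comp3_comp3 s Y Z s Z Y s
  have := comp3_comp3 h₁ Z X s Z X s
  have := comp3_comp3 h₁ Z Y s Y Z s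
  have := comp3_comp3 h₁ Z X s s h₂ Z
  have := comp3_comp3 h₁ Z Y s h₁ s Z
  grind [comp3_proj3_zero, comp3_proj3_one, comp3_proj3_two]

theorem ThreeOne.false_of_inner_two_outer_symm {s h₁ h₂ h₃ : (Fin 3 → A) → A}
    (T : ThreeOne s h₁ h₂ h₃)
    (ea : comp3 s X s h₂ = h₂) (eb : comp3 s X Y h₁ = s) : False := by
  obtain ⟨h_ms, h_mh, h_sw, h_ro, h_sh, h_r2, h_r3, n1, n2, n3, n12, n13, n23, e⟩ := T
  have := comp3_self s
  have := comp3_self h₁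
  have := comp3_self h₂
  have := comp3_self h₃
  have := comp3_comp3 s X Y h₁ X h₁ Y
  have := comp3_comp3 s X s h₂ Y X Z
  have := comp3_comp3 s Y Z s X Y h₁
  grind [comp3_proj3_zero, comp3_proj3_one, comp3_proj3_two]

theorem ThreeOne.false_of_inner_two_outer_one_shifts_symm {s h₁ h₂ h₃ : (Fin 3 → A) → A}
    (T : ThreeOne s h₁ h₂ h₃)
    (ea : comp3 s X s h₂ = h₂) (eb : comp3 s X Y h₁ = h₁) (ed : comp3 s X h₂ h₃ = s) : False := by
  obtain ⟨h_ms, h_mh, h_sw, h_ro, h_sh, h_r2, h_r3, n1, n2, n3, n12, n13, n23, e⟩ := T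
  have := comp3_self s
  have := comp3_self h₁
  have := comp3_self h₂
  have := comp3_self h₃
  have := comp3_comp3 s X Y h₁ h₃ X h₂
  have := comp3_comp3 s Y Z s h₃ X h₂
  grind [comp3_proj3_zero, comp3_proj3_one, comp3_proj3_two]

theorem ThreeOne.false_of_inner_two_outer_two {s h₁ h₂ h₃ : (Fin 3 → A) → A}
    (T : ThreeOne s h₁ h₂ h₃)
    (ea : comp3 s X s h₂ = h₂) (eb : comp3 s X Y h₁ = h₂) : False := by
  obtain ⟨h_ms, h_mh, h_sw, h_ro, h_sh, h_r2, h_r3, n1, n2, n3, n12, n13, n23, e⟩ := T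
  have := comp3_self s
  have := comp3_self h₁
  have := comp3_self h₂
  have := comp3_self h₃
  have := comp3_comp3 s X Y h₁ Y X Z
  have := comp3_comp3 s Y Z s h₁ X Y
  have := comp3_comp3 s Y Z s h₂ X Y
  have := comp3_comp3 s X s h₂ X h₁ Y
  have := comp3_comp3 s X s h₂ X h₂ Y
  grind [comp3_proj3_zero, comp3_proj3_one, comp3_proj3_two]

theorem ThreeOne.false_of_inner_two_outer_three_shifts_symm {s h₁ h₂ h₃ : (Fin 3 → A) → A}
    (T : ThreeOne s h₁ h₂ h₃)
    (ea : comp3 s X s h₂ = h₂) (eb : comp3 s X Y h₁ = h₃) (ed : comp3 s X h₂ h₃ = s) : False := by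
  obtain ⟨h_ms, h_mh, h_sw, h_ro, h_sh, h_r2, h_r3, n1, n2, n3, n12, n13, n23, e⟩ := T
  have := comp3_self s
  have := comp3_self h₁
  have := comp3_self h₂
  have := comp3_self h₃
  have := comp3_comp3 h₁ h₃ X h₂ X Z Y
  have := comp3_comp3 s X Y h₁ h₃ X h₂
  have := comp3_comp3 s Y Z s h₃ X h₂
  grind [comp3_proj3_zero, comp3_proj3_one, comp3_proj3_two]

theorem ThreeOne.false_of_inner_two_outer_three_shifts_one {s h₁ h₂ h₃ : (Fin 3 → A) → A}
    (T : ThreeOne s h₁ h₂ h₃)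
    (ea : comp3 s X s h₂ = h₂) (eb : comp3 s X Y h₁ = h₃) (ed : comp3 s X h₂ h₃ = h₁) : False := by
  obtain ⟨h_ms, h_mh, h_sw, h_ro, h_sh, h_r2, h_r3, n1, n2, n3, n12, n13, n23, e⟩ := T
  have := comp3_self s
  have := comp3_self h₁
  have := comp3_self h₂
  have := comp3_self h₃
  have := comp3_comp3 s X Y h₁ Y X Z
  have := comp3_comp3 s X h₂ h₃ Y X Z
  have := comp3_comp3 s Y Z s X Y h₁
  have := comp3_comp3 s Y Z s Y X h₂
  have := comp3_comp3 s X s h₂ h₁ X Y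
  have := comp3_comp3 s X s h₂ h₂ Y X
  grind [comp3_proj3_zero, comp3_proj3_one, comp3_proj3_two]

theorem ThreeOne.false_of_inner_three_outer_symm {s h₁ h₂ h₃ : (Fin 3 → A) → A}
    (T : ThreeOne s h₁ h₂ h₃)
    (ea : comp3 s X s h₂ = h₃) (eb : comp3 s X Y h₁ = s) : False := by
  obtain ⟨h_ms, h_mh, h_sw, h_ro, h_sh, h_r2, h_r3, n1, n2, n3, n12, n13, n23, e⟩ := T
  have := comp3_self s
  have := comp3_self h₁
  have := comp3_self h₂
  have := comp3_self h₃
  have := comp3_comp3 s Y Z s Z X Y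
  have := comp3_comp3 s X Y s Y s X
  have := comp3_comp3 s X Y h₁ X Y s
  have := comp3_comp3 s X s h₂ Y Z X
  grind [comp3_proj3_zero, comp3_proj3_one, comp3_proj3_two]

theorem ThreeOne.false_of_inner_three_outer_two {s h₁ h₂ h₃ : (Fin 3 → A) → A}
    (T : ThreeOne s h₁ h₂ h₃)
    (ea : comp3 s X s h₂ = h₃) (eb : comp3 s X Y h₁ = h₂) : False := by
  obtain ⟨h_ms, h_mh, h_sw, h_ro, h_sh, h_r2, h_r3, n1, n2, n3, n12, n13, n23, e⟩ := T
  have := comp3_self s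
  have := comp3_self h₁
  have := comp3_self h₂
  have := comp3_self h₃
  have := comp3_comp3 s Y Z s Z X Y
  have := comp3_comp3 s X Y s Y s X
  have := comp3_comp3 s X s h₂ X Z Y
  have := comp3_comp3 s X s h₂ Y Z X
  have := comp3_comp3 h₁ X Y s X s Y
  have := comp3_comp3 s X Y h₁ h₃ X s
  have := comp3_comp3 s Y Z s h₃ X s
  grind [comp3_proj3_zero, comp3_proj3_one, comp3_proj3_two]

theorem ThreeOne.false_of_inner_three_outer_three {s h₁ h₂ h₃ : (Fin 3 → A) → A}
    (T : ThreeOne s h₁ h₂ h₃)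
    (ea : comp3 s X s h₂ = h₃) (eb : comp3 s X Y h₁ = h₃) : False := by
  obtain ⟨h_ms, h_mh, h_sw, h_ro, h_sh, h_r2, h_r3, n1, n2, n3, n12, n13, n23, e⟩ := T
  have := comp3_self s
  have := comp3_self h₁
  have := comp3_self h₂
  have := comp3_self h₃
  have := comp3_comp3 s Y Z s Z X Y
  have := comp3_comp3 s X Y s Y s X
  have := comp3_comp3 s X s h₂ X Z Y
  have := comp3_comp3 s X s h₂ Y Z X
  have := comp3_comp3 h₁ X Y s X s Y
  have := comp3_comp3 s X Y h₁ h₃ s X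
  have := comp3_comp3 s Y Z s h₃ X s
  grind [comp3_proj3_zero, comp3_proj3_one, comp3_proj3_two]

theorem ThreeOne.false_of_inner_two_outer_one_shifts_one {s h₁ h₂ h₃ : (Fin 3 → A) → A}
    (T : ThreeOne s h₁ h₂ h₃)
    (ea : comp3 s X s h₂ = h₂) (eb : comp3 s X Y h₁ = h₁) (ed : comp3 s X h₂ h₃ = h₁)
    (ec : comp3 s h₁ h₂ h₃ = s) : False := by
  obtain ⟨h_ms, h_mh, h_sw, h_ro, h_sh, h_r2, h_r3, n1, n2, n3, n12, n13, n23, e⟩ := T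
  have := comp3_self s
  have := comp3_self h₁
  have := comp3_self h₂
  have := comp3_self h₃
  have := comp3_comp3 s Y Z s Y Z X
  have := comp3_comp3 s Y Z s Z X Y
  have := comp3_comp3 s X Y s h₁ h₂ Z
  have := comp3_comp3 s X Y h₁ X h₂ h₃
  have := comp3_comp3 h₁ Z h₁ h₂ Y Z X
  have := comp3_comp3 s X h₂ h₃ Y Z X
  have := comp3_comp3 s X h₂ h₃ Z X Y
  have := comp3_comp3 s X s h₂ Y Z X
  have := comp3_comp3 s X s h₂ Z X Y
  grind [comp3_proj3_zero, comp3_proj3_one, comp3_proj3_two]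

theorem ThreeOne.cells {s h₁ h₂ h₃ : (Fin 3 → A) → A} (T : ThreeOne s h₁ h₂ h₃)
    (ea : comp3 s X s h₂ = h₃) (eb : comp3 s X Y h₁ = h₁)
    (ec : comp3 h₃ X Y s = s ∨ comp3 h₃ X Y s = h₁ ∨ comp3 h₃ X Y s = h₂ ∨ comp3 h₃ X Y s = h₃) :
    comp3 h₃ X Y h₁ = h₁ ∧
    comp3 h₃ X h₁ Y = h₁ ∧
    comp3 h₃ X h₂ Y = h₂ ∧
    comp3 h₁ X Y h₃ = h₁ ∧
    comp3 h₁ X h₁ h₂ = h₁ ∧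
    comp3 h₂ Y h₁ h₂ = h₂ ∧
    comp3 h₁ X h₂ h₃ = h₁ ∧
    comp3 h₂ X h₁ h₂ = h₁ ∧
    comp3 h₃ X h₂ h₃ = h₃ ∧
    comp3 h₁ h₁ h₂ h₃ = h₁ ∧
    comp3 h₃ X Y h₃ = h₃ := by
  obtain ⟨h_ms, h_mh, h_sw, h_ro, h_sh, h_r2, h_r3, n1, n2, n3, n12, n13, n23, e⟩ := T
  have := comp3_self s
  have := comp3_self h₁
  have := comp3_self h₂
  have := comp3_self h₃
  have := comp3_eq e Y Z X
  have := comp3_eq e Z X Y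
  have := comp3_eq e X Z Y
  have := comp3_eq e Y X Z
  have := comp3_eq e Z Y X
  have := comp3_eq ea Y Z X
  have := comp3_eq ea Z X Y
  have := comp3_eq ea X Z Y
  have := comp3_eq ea Y X Z
  have := comp3_eq ea Z Y X
  have := comp3_eq eb Y Z X
  have := comp3_eq eb Z X Y
  have := comp3_eq eb X Z Y
  have := comp3_eq eb Y X Z
  have := comp3_eq eb Z Y X
  have e0 : comp3 h₃ X Y h₁ = h₁ := by
    have := comp3_comp3 s X Y s X Y h₁
    grind [comp3_proj3_zero, comp3_proj3_one, comp3_proj3_two]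
  have := comp3_eq e0 Y Z X
  have := comp3_eq e0 Z X Y
  have := comp3_eq e0 X Z Y
  have := comp3_eq e0 Y X Z
  have := comp3_eq e0 Z Y X
  have e1 : comp3 h₃ X s Y = h₂ := by
    have := comp3_comp3 s X Y s X s Y
    grind [comp3_proj3_zero, comp3_proj3_one, comp3_proj3_two]
  have := comp3_eq e1 Y Z X
  have := comp3_eq e1 Z X Y
  have := comp3_eq e1 X Z Y
  have := comp3_eq e1 Y X Z
  have := comp3_eq e1 Z Y X
  have e2 : comp3 h₃ X h₁ Y = h₁ := by
    have := comp3_comp3 s X Y s X h₁ Y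
    grind [comp3_proj3_zero, comp3_proj3_one, comp3_proj3_two]
  have := comp3_eq e2 Y Z X
  have := comp3_eq e2 Z X Y
  have := comp3_eq e2 X Z Y
  have := comp3_eq e2 Y X Z
  have := comp3_eq e2 Z Y X
  have e3 : comp3 h₃ X h₂ Y = h₂ := by
    have := comp3_comp3 s X Y s X h₂ Y
    grind [comp3_proj3_zero, comp3_proj3_one, comp3_proj3_two]
  have := comp3_eq e3 Y Z X
  have := comp3_eq e3 Z X Y
  have := comp3_eq e3 X Z Y
  have := comp3_eq e3 Y X Z
  have := comp3_eq e3 Z Y X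
  have e4 : comp3 s X s h₁ = h₁ := by
    have := comp3_comp3 s X Y h₁ X s Y
    grind [comp3_proj3_zero, comp3_proj3_one, comp3_proj3_two]
  have := comp3_eq e4 Y Z X
  have := comp3_eq e4 Z X Y
  have := comp3_eq e4 X Z Y
  have := comp3_eq e4 Y X Z
  have := comp3_eq e4 Z Y X
  have e5 : comp3 h₁ X Y h₃ = h₁ := by
    have := comp3_comp3 h₁ X Y s X Y s
    grind [comp3_proj3_zero, comp3_proj3_one, comp3_proj3_two]
  have := comp3_eq e5 Y Z X
  have := comp3_eq e5 Z X Y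
  have := comp3_eq e5 X Z Y
  have := comp3_eq e5 Y X Z
  have := comp3_eq e5 Z Y X
  have e6 : comp3 h₁ X s h₃ = h₁ := by
    have := comp3_comp3 h₁ X Y s X s Y
    grind [comp3_proj3_zero, comp3_proj3_one, comp3_proj3_two]
  have := comp3_eq e6 Y Z X
  have := comp3_eq e6 Z X Y
  have := comp3_eq e6 X Z Y
  have := comp3_eq e6 Y X Z
  have := comp3_eq e6 Z Y X
  have e7 : comp3 h₁ X s h₁ = h₁ := by
    have := comp3_comp3 h₁ X Y h₁ X s Y
    grind [comp3_proj3_zero, comp3_proj3_one, comp3_proj3_two]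
  have := comp3_eq e7 Y Z X
  have := comp3_eq e7 Z X Y
  have := comp3_eq e7 X Z Y
  have := comp3_eq e7 Y X Z
  have := comp3_eq e7 Z Y X
  have e8 : comp3 h₁ X h₁ h₂ = h₁ := by
    have := comp3_comp3 h₁ X Y h₁ X h₂ Z
    grind [comp3_proj3_zero, comp3_proj3_one, comp3_proj3_two]
  have := comp3_eq e8 Y Z X
  have := comp3_eq e8 Z X Y
  have := comp3_eq e8 X Z Y
  have := comp3_eq e8 Y X Z
  have := comp3_eq e8 Z Y X
  have e9 : comp3 h₂ X s h₁ = h₁ := by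
    have := comp3_comp3 h₁ X Y h₂ s X Y
    grind [comp3_proj3_zero, comp3_proj3_one, comp3_proj3_two]
  have := comp3_eq e9 Y Z X
  have := comp3_eq e9 Z X Y
  have := comp3_eq e9 X Z Y
  have := comp3_eq e9 Y X Z
  have := comp3_eq e9 Z Y X
  have e10 : comp3 h₂ Y h₁ h₂ = h₂ := by
    have := comp3_comp3 h₁ X Y h₂ h₁ Y Z
    grind [comp3_proj3_zero, comp3_proj3_one, comp3_proj3_two]
  have := comp3_eq e10 Y Z X
  have := comp3_eq e10 Z X Y
  have := comp3_eq e10 X Z Y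
  have := comp3_eq e10 Y X Z
  have := comp3_eq e10 Z Y X
  have e11 : comp3 h₁ X h₂ h₃ = h₁ := by
    have := comp3_comp3 h₁ X Y h₃ X h₂ Z
    grind [comp3_proj3_zero, comp3_proj3_one, comp3_proj3_two]
  have := comp3_eq e11 Y Z X
  have := comp3_eq e11 Z X Y
  have := comp3_eq e11 X Z Y
  have := comp3_eq e11 Y X Z
  have := comp3_eq e11 Z Y X
  have e12 : comp3 h₃ X Y s = s := by
    have := comp3_comp3 h₁ X Y h₃ s X Y
    have := comp3_comp3 h₁ X Y s s X Y
    have := comp3_comp3 h₁ s X h₃ X Z Y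
    have := comp3_comp3 h₃ X Y s Y X Z
    have := comp3_comp3 h₃ X Y s Z X Y
    have := comp3_comp3 h₃ X Y s X Z Y
    grind [comp3_proj3_zero, comp3_proj3_one, comp3_proj3_two]
  have := comp3_eq e12 Y Z X
  have := comp3_eq e12 Z X Y
  have := comp3_eq e12 X Z Y
  have := comp3_eq e12 Y X Z
  have := comp3_eq e12 Z Y X
  have e13 : comp3 h₃ X Y h₃ = h₃ := by
    have := comp3_comp3 h₃ X Y s X Y s
    grind [comp3_proj3_zero, comp3_proj3_one, comp3_proj3_two]
  have := comp3_eq e13 Y Z X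
  have := comp3_eq e13 Z X Y
  have := comp3_eq e13 X Z Y
  have := comp3_eq e13 Y X Z
  have := comp3_eq e13 Z Y X
  have e14 : comp3 h₂ X h₁ h₂ = h₁ := by
    have := comp3_comp3 h₃ X Y h₁ X h₂ Z
    grind [comp3_proj3_zero, comp3_proj3_one, comp3_proj3_two]
  have := comp3_eq e14 Y Z X
  have := comp3_eq e14 Z X Y
  have := comp3_eq e14 X Z Y
  have := comp3_eq e14 Y X Z
  have := comp3_eq e14 Z Y X
  have e15 : comp3 h₃ X h₂ h₃ = h₃ := by
    have := comp3_comp3 h₃ X Y h₃ X h₂ Z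
    grind [comp3_proj3_zero, comp3_proj3_one, comp3_proj3_two]
  have := comp3_eq e15 Y Z X
  have := comp3_eq e15 Z X Y
  have := comp3_eq e15 X Z Y
  have := comp3_eq e15 Y X Z
  have := comp3_eq e15 Z Y X
  have e16 : comp3 h₁ h₁ h₂ h₃ = h₁ := by
    have := comp3_comp3 h₁ X Y h₃ h₁ h₂ Z
    grind [comp3_proj3_zero, comp3_proj3_one, comp3_proj3_two]
  have := comp3_eq e16 Y Z X
  have := comp3_eq e16 Z X Y
  have := comp3_eq e16 X Z Y
  have := comp3_eq e16 Y X Z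
  have := comp3_eq e16 Z Y X
  exact ⟨e0, e2, e3, e5, e8, e10, e11, e14, e15, e16, e13⟩

theorem ThreeOne.closed {s h₁ h₂ h₃ : (Fin 3 → A) → A} (T : ThreeOne s h₁ h₂ h₃)
    (ea : comp3 s X s h₂ = h₃) (eb : comp3 s X Y h₁ = h₁)
    (ec : comp3 h₃ X Y s = s ∨ comp3 h₃ X Y s = h₁ ∨ comp3 h₃ X Y s = h₂ ∨ comp3 h₃ X Y s = h₃)
    (u v w : (Fin 3 → A) → A) (hu : (u = X ∨ u = Y ∨ u = Z ∨ u = h₁ ∨ u = h₂ ∨ u = h₃))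
    (hv : (v = X ∨ v = Y ∨ v = Z ∨ v = h₁ ∨ v = h₂ ∨ v = h₃))
    (hw : (w = X ∨ w = Y ∨ w = Z ∨ w = h₁ ∨ w = h₂ ∨ w = h₃)) :
    comp3 h₁ u v w = X ∨ comp3 h₁ u v w = Y ∨ comp3 h₁ u v w = Z ∨
      comp3 h₁ u v w = h₁ ∨ comp3 h₁ u v w = h₂ ∨ comp3 h₁ u v w = h₃ := by
  obtain ⟨e0, e1, e2, e3, e4, e5, e6, e7, e8, e9, e10⟩ := T.cells ea eb ec
  obtain ⟨-, h_mh, -, -, h_sh, h_r2, h_r3, -, -, -, -, -, -, -⟩ := T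
  have p0 := comp3_self h₁
  have p1 : comp3 h₁ X Z Y = h₁ := by rw [h_sh, p0]
  have p2 : comp3 h₁ Y Z X = h₂ := by rw [← h_r2, comp3_self]
  have p3 : comp3 h₁ Y X Z = h₂ := by rw [h_sh, p2]
  have p4 : comp3 h₁ Z X Y = h₃ := by rw [← h_r3, comp3_self]
  have p5 : comp3 h₁ Z Y X = h₃ := by rw [h_sh, p4]
  have c00 := comp3_eq e0 Y Z X
  have c01 := comp3_eq e0 Z X Y
  have c02 := comp3_eq e0 X Z Y
  have c03 := comp3_eq e0 Y X Z
  have c04 := comp3_eq e0 Z Y X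
  have c10 := comp3_eq e1 Y Z X
  have c11 := comp3_eq e1 Z X Y
  have c12 := comp3_eq e1 X Z Y
  have c13 := comp3_eq e1 Y X Z
  have c14 := comp3_eq e1 Z Y X
  have c20 := comp3_eq e2 Y Z X
  have c21 := comp3_eq e2 Z X Y
  have c22 := comp3_eq e2 X Z Y
  have c23 := comp3_eq e2 Y X Z
  have c24 := comp3_eq e2 Z Y X
  have c30 := comp3_eq e3 Y Z X
  have c31 := comp3_eq e3 Z X Y
  have c32 := comp3_eq e3 X Z Y
  have c33 := comp3_eq e3 Y X Z
  have c34 := comp3_eq e3 Z Y X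
  have c40 := comp3_eq e4 Y Z X
  have c41 := comp3_eq e4 Z X Y
  have c42 := comp3_eq e4 X Z Y
  have c43 := comp3_eq e4 Y X Z
  have c44 := comp3_eq e4 Z Y X
  have c50 := comp3_eq e5 Y Z X
  have c51 := comp3_eq e5 Z X Y
  have c52 := comp3_eq e5 X Z Y
  have c53 := comp3_eq e5 Y X Z
  have c54 := comp3_eq e5 Z Y X
  have c60 := comp3_eq e6 Y Z X
  have c61 := comp3_eq e6 Z X Y
  have c62 := comp3_eq e6 X Z Y
  have c63 := comp3_eq e6 Y X Z
  have c64 := comp3_eq e6 Z Y X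
  have c70 := comp3_eq e7 Y Z X
  have c71 := comp3_eq e7 Z X Y
  have c72 := comp3_eq e7 X Z Y
  have c73 := comp3_eq e7 Y X Z
  have c74 := comp3_eq e7 Z Y X
  have c80 := comp3_eq e8 Y Z X
  have c81 := comp3_eq e8 Z X Y
  have c82 := comp3_eq e8 X Z Y
  have c83 := comp3_eq e8 Y X Z
  have c84 := comp3_eq e8 Z Y X
  have c90 := comp3_eq e9 Y Z X
  have c91 := comp3_eq e9 Z X Y
  have c92 := comp3_eq e9 X Z Y
  have c93 := comp3_eq e9 Y X Z
  have c94 := comp3_eq e9 Z Y X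
  have c100 := comp3_eq e10 Y Z X
  have c101 := comp3_eq e10 Z X Y
  have c102 := comp3_eq e10 X Z Y
  have c103 := comp3_eq e10 Y X Z
  have c104 := comp3_eq e10 Z Y X
  simp only [h_r2, h_r3, comp3_proj3_zero, comp3_proj3_one,
    p0, p1, p2, p3, p4, p5]
    at e0 e1 e2 e5 e7 e8 e10
      c00 c01 c02 c03 c04 c10 c11 c12 c13 c14 c20
      c21 c22 c23 c24 c30 c31 c32 c33 c34 c40 c41
      c42 c43 c44 c50 c51 c52 c53 c54 c60 c61 c62
      c63 c64 c70 c71 c72 c73 c74 c80 c81 c82 c83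
      c84 c90 c91 c92 c93 c94 c100 c101 c102 c103 c104
  have m1 := fun a b => (h_mh a b).1
  have m2 := fun a b => (h_mh a b).2.1
  have m3 := fun a b => (h_mh a b).2.2
  rcases hu with hu | hu | hu | hu | hu | hu <;> rcases hv with hv | hv | hv | hv | hv | hv <;>
    rcases hw with hw | hw | hw | hw | hw | hw <;> rw [hu, hv, hw] <;>
    first
    | simp only [m1, m2, m3, true_or, or_true]
    | (simp only [*, -h_sh, -hu, -hv, -hw, true_or, or_true])
    | (rw [h_sh]; (simp only [*, -h_sh, -hu, -hv, -hw, true_or, or_true]))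

theorem ThreeOne.eq_or_eq_of_swap {s h₁ h₂ h₃ : (Fin 3 → A) → A} (T : ThreeOne s h₁ h₂ h₃)
    (d : comp3 s X h₂ h₃ = s ∨ comp3 s X h₂ h₃ = h₁ ∨ comp3 s X h₂ h₃ = h₂ ∨
      comp3 s X h₂ h₃ = h₃) : comp3 s X h₂ h₃ = s ∨ comp3 s X h₂ h₃ = h₁ := by
  obtain ⟨-, -, h_sw, h_ro, h_sh, h_r2, h_r3, n1, n2, n3, n12, n13, n23, -⟩ := T
  have := comp3_self h₁
  have := comp3_self h₂
  have := comp3_self h₃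
  have := comp3_comp3 s X h₂ h₃ X Z Y
  grind [comp3_proj3_zero, comp3_proj3_one, comp3_proj3_two]

theorem ThreeOne.eq_of_rot {s h₁ h₂ h₃ : (Fin 3 → A) → A} (T : ThreeOne s h₁ h₂ h₃)
    (c : comp3 s h₁ h₂ h₃ = s ∨ comp3 s h₁ h₂ h₃ = h₁ ∨ comp3 s h₁ h₂ h₃ = h₂ ∨
      comp3 s h₁ h₂ h₃ = h₃) : comp3 s h₁ h₂ h₃ = s := by
  obtain ⟨-, -, h_sw, h_ro, h_sh, h_r2, h_r3, n1, n2, n3, n12, n13, n23, -⟩ := T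
  have := comp3_self h₁
  have := comp3_self h₂
  have := comp3_self h₃
  have := comp3_comp3 s h₁ h₂ h₃ Y Z X
  grind [comp3_proj3_zero, comp3_proj3_one, comp3_proj3_two]

/-- Abstract description of the set of majority operations in a minimal majority clone. -/
structure MinMaj (M : Set ((Fin 3 → A) → A)) : Prop where
  inj : Function.Injective (proj3 (A := A))
  maj : ∀ h ∈ M, ∀ a b, comp3 h a a b = a ∧ comp3 h a b a = a ∧ comp3 h b a a = a
  proj_notMem : ∀ i, proj3 i ∉ M
  comp_mem : ∀ h ∈ M, ∀ u ∈ Set.range proj3 ∪ M, ∀ v ∈ Set.range proj3 ∪ M,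
    ∀ w ∈ Set.range proj3 ∪ M, u ≠ v → u ≠ w → v ≠ w → comp3 h u v w ∈ M
  subset_of_closed : ∀ S ⊆ M, S.Nonempty →
    (∀ h ∈ S, ∀ u ∈ Set.range proj3 ∪ S, ∀ v ∈ Set.range proj3 ∪ S,
      ∀ w ∈ Set.range proj3 ∪ S, u ≠ v → u ≠ w → v ≠ w → comp3 h u v w ∈ S) → M ⊆ S

theorem mem_range_union_iff {S : Set ((Fin 3 → A) → A)} {u : (Fin 3 → A) → A} :
    u ∈ Set.range proj3 ∪ S ↔ u = X ∨ u = Y ∨ u = Z ∨ u ∈ S := by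
  simp only [Set.mem_union, Set.mem_range, Fin.exists_fin_succ]
  simp [eq_comm, or_assoc]

theorem comp3_rot {h : (Fin 3 → A) → A} (e : comp3 h Y Z X = h) (a b d : (Fin 3 → A) → A) :
    comp3 h a b d = comp3 h b d a := (comp3_eq e a b d).symm

theorem comp3_swap {h : (Fin 3 → A) → A} (e : comp3 h Y X Z = h) (a b d : (Fin 3 → A) → A) :
    comp3 h a b d = comp3 h b a d := (comp3_eq e a b d).symm

namespace MinMaj

theorem proj_ne {M : Set ((Fin 3 → A) → A)} (H : MinMaj M) : X ≠ Y ∧ X ≠ Z ∧ Y ≠ Z :=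
  ⟨H.inj.ne (by decide), H.inj.ne (by decide), H.inj.ne (by decide)⟩

theorem ne_proj {M : Set ((Fin 3 → A) → A)} (H : MinMaj M) {h : (Fin 3 → A) → A} (hh : h ∈ M) :
    h ≠ X ∧ h ≠ Y ∧ h ≠ Z :=
  ⟨fun e => H.proj_notMem 0 (e ▸ hh), fun e => H.proj_notMem 1 (e ▸ hh),
    fun e => H.proj_notMem 2 (e ▸ hh)⟩

theorem eq_singleton {M : Set ((Fin 3 → A) → A)} (H : MinMaj M) {s : (Fin 3 → A) → A} (hs : s ∈ M)
    (rot : comp3 s Y Z X = s)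
    (swap : comp3 s Y X Z = s) (idem : comp3 s s Y Z = s) : M = {s} := by
  refine (H.subset_of_closed {s} (by simpa) (by simp) ?_).antisymm (by simpa)
  rintro h rfl u hu v hv w hw huv huw hvw
  rw [mem_range_union_iff, Set.mem_singleton_iff] at hu hv hw
  rw [Set.mem_singleton_iff]
  have h1 := comp3_eq idem Y Z X
  have h2 := comp3_eq idem Z X Y
  have h3 := comp3_rot rot
  have h4 := comp3_swap swap
  rcases hu with hu | hu | hu | hu <;> rcases hv with hv | hv | hv | hv <;>
    grind [comp3_proj3_zero, comp3_proj3_one, comp3_proj3_two]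

theorem ncard_eq_four {B : Type*} {a b c d : B} (h1 : a ≠ b) (h2 : a ≠ c) (h3 : a ≠ d)
    (h4 : b ≠ c) (h5 : b ≠ d) (h6 : c ≠ d) : ({a, b, c, d} : Set B).ncard = 4 := by
  rw [Set.ncard_insert_of_notMem, Set.ncard_insert_of_notMem, Set.ncard_pair h6] <;>
    simp [*]

theorem comp_proj_mem {M : Set ((Fin 3 → A) → A)} (H : MinMaj M) {h : (Fin 3 → A) → A}
    (hh : h ∈ M) : comp3 h Y Z X ∈ M ∧ comp3 h Z X Y ∈ M ∧ comp3 h Y X Z ∈ M ∧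
      comp3 h X Z Y ∈ M ∧ comp3 h Z Y X ∈ M := by
  obtain ⟨n1, n2, n3⟩ := H.proj_ne
  refine ⟨?_, ?_, ?_, ?_, ?_⟩ <;> apply H.comp_mem h hh <;>
    first
    | exact .inl ⟨_, rfl⟩
    | first | assumption | (apply Ne.symm; assumption)

/-- If all members of `M` are cyclically symmetric and one of them is totally symmetric,
then `M` is a singleton. -/
theorem exists_eq_singleton {M : Set ((Fin 3 → A) → A)} (H : MinMaj M) (fin : M.Finite)
    (rot : ∀ h ∈ M, comp3 h Y Z X = h) {s : (Fin 3 → A) → A} (hs : s ∈ M)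
    (swap : comp3 s Y X Z = s) : ∃ e, M = {e} := by
  have all : ∀ h ∈ M, comp3 h Y X Z = h := by
    suffices M ⊆ {h ∈ M | comp3 h Y X Z = h} from fun h hh => (this hh).2
    refine H.subset_of_closed _ (Set.sep_subset _ _) ⟨s, hs, swap⟩ ?_
    rintro h ⟨hh, sh⟩ u hu v hv w hw huv huw hvw
    have hg : comp3 h u v w ∈ M := by
      have sub : Set.range proj3 ∪ {h ∈ M | comp3 h Y X Z = h} ⊆ Set.range proj3 ∪ M :=
        Set.union_subset_union_right _ (Set.sep_subset _ _)
      exact H.comp_mem h hh u (sub hu) v (sub hv) w (sub hw) huv huw hvw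
    refine ⟨hg, ?_⟩
    have fixed : ∀ g ∈ {h ∈ M | comp3 h Y X Z = h},
        comp3 g Y X Z = g ∧ comp3 g X Z Y = g ∧ comp3 g Z Y X = g := by
      rintro g ⟨hg, sg⟩
      have := comp3_rot (rot g hg)
      grind
    have h1 := comp3_rot (rot h hh)
    have h2 := comp3_swap sh
    have h3 := comp3_rot (rot _ hg)
    have h4 := comp3_comp3 h u v w Y X Z
    have h5 := comp3_comp3 h u v w X Z Y
    have h6 := comp3_comp3 h u v w Z Y X
    rw [mem_range_union_iff] at hu hv hw
    generalize {h ∈ M | comp3 h Y X Z = h} = N at *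
    rcases hu with hu | hu | hu | hu <;> rcases hv with hv | hv | hv | hv <;>
      grind [comp3_proj3_zero, comp3_proj3_one, comp3_proj3_two]
  have mul_mem : ∀ h ∈ M, ∀ k ∈ M, comp3 h k Y Z ∈ M := fun h hh k hk =>
    H.comp_mem h hh k (.inr hk) Y (.inl ⟨_, rfl⟩) Z (.inl ⟨_, rfl⟩)
      (H.ne_proj hk).2.1 (H.ne_proj hk).2.2 H.proj_ne.2.2
  let _ : Semigroup M :=
    { mul := fun h k => ⟨comp3 h.1 k.1 Y Z, mul_mem _ h.2 _ k.2⟩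
      mul_assoc := fun _ _ _ => rfl }
  let _ : TopologicalSpace M := ⊥
  have : DiscreteTopology M := ⟨rfl⟩
  have : Finite M := fin
  have : Nonempty M := ⟨⟨s, hs⟩⟩
  obtain ⟨e, he⟩ := exists_idempotent_of_compact_t2_of_continuous_mul_left (M := M)
    fun _ => continuous_of_discreteTopology
  exact ⟨e, H.eq_singleton e.2 (rot _ e.2) (all _ e.2) (congrArg Subtype.val he)⟩

/-- If all members of `M` are cyclically symmetric, then `M` has neither 2 nor 4 elements. -/
theorem ncard_of_rot {M : Set ((Fin 3 → A) → A)} (H : MinMaj M) (ne : M.Nonempty)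
    (fin : M.Finite) (rot : ∀ h ∈ M, comp3 h Y Z X = h) : M.ncard ≠ 2 ∧ M.ncard ≠ 4 := by
  by_cases hs : ∃ s ∈ M, comp3 s Y X Z = s
  · obtain ⟨s, hs, swap⟩ := hs
    obtain ⟨e, he⟩ := H.exists_eq_singleton fin rot hs swap
    simp [he]
  push Not at hs
  have tau : ∀ h ∈ M, comp3 h Y X Z ∈ M := fun h hh => (H.comp_proj_mem hh).2.2.1
  obtain ⟨f, hf⟩ := ne
  obtain ⟨f', hf'⟩ : ∃ f', f' = comp3 f Y X Z := ⟨_, rfl⟩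
  have sw : ∀ {g g' : (Fin 3 → A) → A}, g' = comp3 g Y X Z → ∀ a b d,
      comp3 g a b d = comp3 g' b a d := by
    rintro g _ rfl a b d
    rfl
  have mf' : f' ∈ M := hf' ▸ tau f hf
  have nf : f ≠ f' := fun e => hs f hf (hf' ▸ e.symm)
  have mem : ∀ u ∈ M, ∀ v ∈ M, u ≠ v → comp3 f X u v ∈ M := fun u hu v hv =>
    H.comp_mem f hf X (.inl ⟨_, rfl⟩) u (.inr hu) v (.inr hv)
      (H.ne_proj hu).1.symm (H.ne_proj hv).1.symm
  obtain ⟨g, hg⟩ : ∃ g, g = comp3 f X f f' := ⟨_, rfl⟩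
  have mg : g ∈ M := hg ▸ mem f hf f' mf' nf
  obtain ⟨g1, g2⟩ := comp3_ne_of_rot_of_swap (H.maj f hf) (comp3_rot (rot f hf)) (sw hf') nf
  rw [← hg] at g1 g2
  obtain ⟨g', hg'⟩ : ∃ g', g' = comp3 g Y X Z := ⟨_, rfl⟩
  have mg' : g' ∈ M := hg' ▸ tau g mg
  have ng : g ≠ g' := fun e => hs g mg (hg' ▸ e.symm)
  have inv : comp3 g' Y X Z = g := by rw [hg']; exact comp3_self g
  have inv' : comp3 f' Y X Z = f := by rw [hf']; exact comp3_self f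
  have n1 : g' ≠ f := by rintro rfl; exact g2 (by rw [← inv, hf'])
  have n2 : g' ≠ f' := by rintro rfl; exact g1 (by rw [← inv, inv'])
  have sub : ({f, f', g, g'} : Set _) ⊆ M := by
    simp [Set.insert_subset_iff, hf, mf', mg, mg']
  have card : ({f, f', g, g'} : Set ((Fin 3 → A) → A)).ncard = 4 :=
    ncard_eq_four nf g1.symm n1.symm g2.symm n2.symm ng
  refine ⟨fun h => ?_, fun h => ?_⟩
  · have := Set.ncard_le_ncard sub fin
    omega
  · have eq := Set.eq_of_subset_of_ncard_le sub (by omega) fin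
    have k := mem g mg g' mg' ng
    rw [← eq] at k
    exact false_of_rot_of_swap (H.maj f hf) (comp3_rot (rot f hf)) (sw hf') (comp3_rot (rot g mg))
      (sw hg') nf ng hg.symm k

theorem false_of_threeOne {M : Set ((Fin 3 → A) → A)} (H : MinMaj M)
    {s h₁ h₂ h₃ : (Fin 3 → A) → A} (T : ThreeOne s h₁ h₂ h₃) (eq : M = {s, h₁, h₂, h₃}) :
    False := by
  have ms : s ∈ M := by simp [eq]
  have m1 : h₁ ∈ M := by simp [eq]
  have m2 : h₂ ∈ M := by simp [eq]
  have m3 : h₃ ∈ M := by simp [eq]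
  have mem : ∀ h ∈ M, ∀ u ∈ Set.range proj3 ∪ M, ∀ v ∈ Set.range proj3 ∪ M,
      ∀ w ∈ Set.range proj3 ∪ M, u ≠ v → u ≠ w → v ≠ w →
        comp3 h u v w = s ∨ comp3 h u v w = h₁ ∨ comp3 h u v w = h₂ ∨ comp3 h u v w = h₃ :=
    fun h hh u hu v hv w hw huv huw hvw => by
      simpa [eq] using H.comp_mem h hh u hu v hv w hw huv huw hvw
  have px : ∀ i, proj3 i ∈ Set.range (proj3 (A := A)) ∪ M := fun i => .inl ⟨i, rfl⟩
  have a := mem s ms X (px 0) s (.inr ms) h₂ (.inr m2) (H.ne_proj ms).1.symm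
    (H.ne_proj m2).1.symm T.ne_two
  have b := mem s ms X (px 0) Y (px 1) h₁ (.inr m1) H.proj_ne.1
    (H.ne_proj m1).1.symm (H.ne_proj m1).2.1.symm
  have d := mem s ms X (px 0) h₂ (.inr m2) h₃ (.inr m3) (H.ne_proj m2).1.symm
    (H.ne_proj m3).1.symm T.two_ne_three
  have c := mem s ms h₁ (.inr m1) h₂ (.inr m2) h₃ (.inr m3) T.one_ne_two T.one_ne_three
    T.two_ne_three
  have k := mem h₃ m3 X (px 0) Y (px 1) s (.inr ms) H.proj_ne.1
    (H.ne_proj ms).1.symm (H.ne_proj ms).2.1.symm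
  have d' := T.eq_or_eq_of_swap d
  have c' := T.eq_of_rot c
  rcases a with a | a | a | a
  · exact T.false_of_inner_symm a
  · exact T.false_of_inner_one a
  · rcases b with b | b | b | b
    · exact T.false_of_inner_two_outer_symm a b
    · exact d'.elim (T.false_of_inner_two_outer_one_shifts_symm a b) fun d =>
        T.false_of_inner_two_outer_one_shifts_one a b d c'
    · exact T.false_of_inner_two_outer_two a b
    · exact d'.elim (T.false_of_inner_two_outer_three_shifts_symm a b)
        (T.false_of_inner_two_outer_three_shifts_one a b)
  · rcases b with b | b | b | b
    · exact T.false_of_inner_three_outer_symm a b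
    · have sub : M ⊆ {h₁, h₂, h₃} := by
        have sub : {h₁, h₂, h₃} ⊆ M := eq ▸ Set.subset_insert _ _
        have sub' := Set.union_subset_union_right (Set.range proj3) sub
        refine H.subset_of_closed _ sub (by simp) ?_
        intro h hh u hu v hv w hw huv huw hvw
        have hM : comp3 h u v w ∈ M :=
          H.comp_mem h (sub hh) u (sub' hu) v (sub' hv) w (sub' hw) huv huw hvw
        rw [mem_range_union_iff, Set.mem_insert_iff, Set.mem_insert_iff,
          Set.mem_singleton_iff] at hu hv hw
        obtain ⟨n1, n2, n3⟩ := H.ne_proj hM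
        have q := T.closed a b k
        rw [Set.mem_insert_iff, Set.mem_insert_iff, Set.mem_singleton_iff] at hh ⊢
        rcases hh with rfl | rfl | rfl
        · exact (((q u v w hu hv hw).resolve_left n1).resolve_left n2).resolve_left n3
        · rw [T.rot_two] at n1 n2 n3 ⊢
          exact (((q v w u hv hw hu).resolve_left n1).resolve_left n2).resolve_left n3
        · rw [T.rot_three] at n1 n2 n3 ⊢
          exact (((q w u v hw hu hv).resolve_left n1).resolve_left n2).resolve_left n3
      have := sub ms
      simp [T.ne_one, T.ne_two, T.ne_three] at this
    · exact T.false_of_inner_three_outer_two a b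
    · exact T.false_of_inner_three_outer_three a b

theorem rot_ne {h : (Fin 3 → A) → A} (rot : comp3 h Y Z X ≠ h) :
    comp3 h Y Z X ≠ comp3 h Z X Y ∧ comp3 h Z X Y ≠ h := by
  refine ⟨fun e => rot ?_, fun e => rot ?_⟩
  · exact (congrArg (comp3 · Z X Y) e).symm.trans (comp3_self h)
  · exact (congrArg (comp3 · Y Z X) e).symm.trans (comp3_self h)

theorem false_of_symm {M : Set ((Fin 3 → A) → A)} (H : MinMaj M) (fin : M.Finite)
    (h4 : M.ncard = 4) {s h : (Fin 3 → A) → A} (ms : s ∈ M) (rot_s : comp3 s Y Z X = s)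
    (swap_s : comp3 s Y X Z = s) (hh : h ∈ M) (swap_h : comp3 h X Z Y = h)
    (rot_h : comp3 h Y Z X ≠ h) : False := by
  obtain ⟨o1, o2, -⟩ := H.comp_proj_mem hh
  obtain ⟨n12, n13⟩ := rot_ne rot_h
  have s1 : s ≠ h := by rintro rfl; exact rot_h rot_s
  have s2 : s ≠ comp3 h Y Z X := fun e =>
    n12 (e.symm.trans (rot_s.symm.trans (congrArg (comp3 · Y Z X) e)))
  have s3 : s ≠ comp3 h Z X Y := fun e =>
    n13 (e.symm.trans (rot_s.symm.trans ((congrArg (comp3 · Y Z X) e).trans (comp3_self h))))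
  have eq : {s, h, comp3 h Y Z X, comp3 h Z X Y} = M :=
    Set.eq_of_subset_of_ncard_le (by simp [Set.insert_subset_iff, hh, o1, o2, ms])
      (by rw [ncard_eq_four s1 s2 s3 rot_h.symm n13.symm n12, h4]) fin
  have inner : comp3 s s Y Z ∈ M := H.comp_mem s ms s (.inr ms) Y (.inl ⟨_, rfl⟩) Z
    (.inl ⟨_, rfl⟩) (H.ne_proj ms).2.1 (H.ne_proj ms).2.2 H.proj_ne.2.2
  have e : comp3 (comp3 s s Y Z) X Z Y = comp3 s s Y Z := by
    have xzy := (comp3_rot rot_s X Z Y).trans ((comp3_rot rot_s Z Y X).trans swap_s)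
    calc comp3 (comp3 s s Y Z) X Z Y = comp3 s (comp3 s X Z Y) Z Y := rfl
      _ = comp3 s s Z Y := by rw [xzy]
      _ = comp3 s s Y Z := by
        rw [comp3_rot rot_s s Z Y, comp3_swap swap_s Z Y s, comp3_rot rot_s s Y Z]
  rw [← eq] at inner
  rcases inner with q | q | q | q
  · have := H.eq_singleton ms rot_s swap_s q
    simp [this] at h4
  · refine H.false_of_threeOne (s := s) (h₁ := h) (h₂ := comp3 h Y Z X) (h₃ := comp3 h Z X Y)
      ?_ eq.symm
    exact
      { maj_s := H.maj s ms
        maj_h := H.maj h hh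
        swap_s := comp3_swap swap_s
        rot_s := comp3_rot rot_s
        swap_h := fun a b d => (comp3_eq swap_h a b d).symm
        rot_two := fun _ _ _ => rfl
        rot_three := fun _ _ _ => rfl
        ne_one := s1
        ne_two := s2
        ne_three := s3
        one_ne_two := rot_h.symm
        one_ne_three := n13.symm
        two_ne_three := n12
        inner := q }
  · rw [q] at e
    exact n12 (e.symm.trans (congrArg (comp3 · Z X Y) swap_h))
  · rw [q] at e
    exact n12 ((congrArg (comp3 · Y Z X) swap_h).symm.trans e)

theorem ncard_of_not_rot {M : Set ((Fin 3 → A) → A)} (H : MinMaj M) (fin : M.Finite)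
    {h : (Fin 3 → A) → A} (hh : h ∈ M) (rot : comp3 h Y Z X ≠ h) :
    M.ncard ≠ 2 ∧ M.ncard ≠ 4 := by
  obtain ⟨o1, o2, -, o4, -⟩ := H.comp_proj_mem hh
  obtain ⟨n12, n13⟩ := rot_ne rot
  have card : ({h, comp3 h Y Z X, comp3 h Z X Y} : Set _).ncard = 3 :=
    Set.ncard_eq_three.2 ⟨_, _, _, rot.symm, n13.symm, n12, rfl⟩
  have sub : {h, comp3 h Y Z X, comp3 h Z X Y} ⊆ M := by
    simp [Set.insert_subset_iff, hh, o1, o2]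
  have := Set.ncard_le_ncard sub fin
  refine ⟨by omega, fun h4 => ?_⟩
  obtain ⟨s, ms, hs⟩ : ∃ s ∈ M, s ∉ ({h, comp3 h Y Z X, comp3 h Z X Y} : Set _) :=
    Set.exists_mem_notMem_of_ncard_lt_ncard (by omega)
  simp only [Set.mem_insert_iff, Set.mem_singleton_iff, not_or] at hs
  obtain ⟨s1, s2, s3⟩ := hs
  have eq : {s, h, comp3 h Y Z X, comp3 h Z X Y} = M :=
    Set.eq_of_subset_of_ncard_le (by simp [Set.insert_subset_iff, hh, o1, o2, ms])
      (by rw [ncard_eq_four s1 s2 s3 rot.symm n13.symm n12, h4]) fin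
  have mem : ∀ g ∈ M, g = s ∨ g = h ∨ g = comp3 h Y Z X ∨ g = comp3 h Z X Y := fun g hg => by
    simpa [← eq] using hg
  obtain ⟨p1, -, p3, -⟩ := H.comp_proj_mem ms
  have rot_s : comp3 s Y Z X = s := by
    have e : comp3 (comp3 s Y Z X) Z X Y = s := comp3_self s
    rcases mem _ p1 with q | q | q | q
    · exact q
    · exact absurd (e.symm.trans (congrArg (comp3 · Z X Y) q)) s3
    · exact absurd (e.symm.trans ((congrArg (comp3 · Z X Y) q).trans (comp3_self h))) s1
    · exact absurd (e.symm.trans (congrArg (comp3 · Z X Y) q)) s2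
  have swap_s : comp3 s Y X Z = s := by
    have e : comp3 (comp3 s Y X Z) Y Z X = comp3 s Y X Z := comp3_rot rot_s Z Y X
    rcases mem _ p3 with q | q | q | q
    · exact q
    all_goals rw [q] at e
    · exact absurd e rot
    · exact absurd e.symm n12
    · exact absurd (e.symm.trans (comp3_self h)) n13
  rcases mem _ o4 with q | q | q | q
  · refine s1 ?_
    have e : comp3 (comp3 h X Z Y) X Z Y = h := comp3_self h
    rw [q] at e
    exact ((comp3_rot rot_s X Z Y).trans ((comp3_rot rot_s Z Y X).trans swap_s)).symm.trans e
  · exact H.false_of_symm fin h4 ms rot_s swap_s hh q rot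
  · exact H.false_of_symm fin h4 ms rot_s swap_s o2 (congrArg (comp3 · Y Z X) q)
      fun e => n13 (e.symm.trans (comp3_self h))
  · exact H.false_of_symm fin h4 ms rot_s swap_s o1 (congrArg (comp3 · Z X Y) q) n12.symm

end MinMaj

/-- The operations that send tuples of members of `S` to members of `S`. -/
def stabilizer (S : Set ((Fin 3 → A) → A)) : Set (Ops A) :=
  {g | ∀ p : Fin (g.1 + 1) → (Fin 3 → A) → A, (∀ i, p i ∈ S) →
    (fun t => g.2 fun i => p i t) ∈ S}

theorem isClone_stabilizer (S : Set ((Fin 3 → A) → A)) : IsClone (stabilizer S) :=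
  ⟨fun _ i _ hp => hp i, fun _ _ _ _ hf hg p hp => hf _ fun i => hg i p hp⟩

theorem mem_of_mem_stabilizer {S : Set ((Fin 3 → A) → A)} (hS : Set.range proj3 ⊆ S)
    {g : (Fin 3 → A) → A} (hg : (⟨2, g⟩ : Ops A) ∈ stabilizer S) : g ∈ S :=
  hg proj3 fun i => hS ⟨i, rfl⟩

theorem mem_stabilizer {S : Set ((Fin 3 → A) → A)} {g : (Fin 3 → A) → A}
    (hg : ∀ u ∈ S, ∀ v ∈ S, ∀ w ∈ S, comp3 g u v w ∈ S) :
    (⟨2, g⟩ : Ops A) ∈ stabilizer S := by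
  intro p hp
  have : (fun t => g fun i => p i t) = comp3 g (p 0) (p 1) (p 2) := by
    funext t
    exact congrArg g (by ext i; fin_cases i <;> rfl)
  exact this ▸ hg _ (hp 0) _ (hp 1) _ (hp 2)

theorem IsClone.inter {C D : Set (Ops A)} (hC : IsClone C) (hD : IsClone D) :
    IsClone (C ∩ D) :=
  ⟨fun n i => ⟨hC.1 n i, hD.1 n i⟩, fun n m f g hf hg =>
    ⟨hC.2 n m f g hf.1 fun i => (hg i).1, hD.2 n m f g hf.2 fun i => (hg i).2⟩⟩

theorem IsClone.comp3_mem {C : Set (Ops A)} (hC : IsClone C) {h u v w : (Fin 3 → A) → A}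
    (hh : (⟨2, h⟩ : Ops A) ∈ C) (hu : (⟨2, u⟩ : Ops A) ∈ C) (hv : (⟨2, v⟩ : Ops A) ∈ C)
    (hw : (⟨2, w⟩ : Ops A) ∈ C) : (⟨2, comp3 h u v w⟩ : Ops A) ∈ C := by
  have := hC.2 2 2 h ![u, v, w] hh (by simp [Fin.forall_fin_succ, hu, hv, hw])
  convert this using 3 with t
  simp only [comp3]
  congr 1
  ext i
  fin_cases i <;> rfl

theorem IsMajority.comp3_self_left {h : (Fin 3 → A) → A} (hh : IsMajority h)
    (a b : (Fin 3 → A) → A) :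
    comp3 h a a b = a ∧ comp3 h a b a = a ∧ comp3 h b a a = a :=
  ⟨funext fun t => (hh (a t) (b t)).1, funext fun t => (hh (a t) (b t)).2.1,
    funext fun t => (hh (a t) (b t)).2.2⟩

theorem IsMajority.comp3 {h u v w : (Fin 3 → A) → A} (hh : IsMajority h)
    (hu : u ∈ Set.range proj3 ∪ {g | IsMajority g})
    (hv : v ∈ Set.range proj3 ∪ {g | IsMajority g})
    (hw : w ∈ Set.range proj3 ∪ {g | IsMajority g})
    (huv : u ≠ v) (huw : u ≠ w) (hvw : v ≠ w) : IsMajority (comp3 h u v w) := by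
  rw [mem_range_union_iff, Set.mem_ofPred_eq] at hu hv hw
  intro x y
  have h0 := (hh x x).1
  have h1 := hh x y
  have h2 := fun g (hg : IsMajority g) => hg x y
  simp only [_root_.comp3]
  rcases hu with rfl | rfl | rfl | hu <;> rcases hv with rfl | rfl | rfl | hv <;>
    rcases hw with rfl | rfl | rfl | hw <;>
    first
    | exact absurd rfl huv
    | exact absurd rfl huw
    | exact absurd rfl hvw
    | simp [proj3, *]

theorem IsMajority.comp3_mem {h u v w : (Fin 3 → A) → A} (hh : IsMajority h)
    {S : Set ((Fin 3 → A) → A)} (hv : v ∈ S) (hw : w ∈ S)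
    (hS : u ≠ v → u ≠ w → v ≠ w → _root_.comp3 h u v w ∈ S) : _root_.comp3 h u v w ∈ S := by
  by_cases huv : u = v
  · rw [huv, (hh.comp3_self_left v w).1]
    exact hv
  by_cases huw : u = w
  · rw [huw, (hh.comp3_self_left w v).2.1]
    exact hw
  by_cases hvw : v = w
  · rw [hvw, (hh.comp3_self_left w u).2.2]
    exact hw
  exact hS huv huw hvw

theorem IsMajority.ne_proj3 [Nontrivial A] {h : (Fin 3 → A) → A} (hh : IsMajority h)
    (i : Fin 3) : h ≠ proj3 i := by
  rintro rfl
  obtain ⟨x, y, hxy⟩ := exists_pair_ne A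
  obtain ⟨h1, h2, h3⟩ := hh x y
  fin_cases i
  · exact hxy h3.symm
  · exact hxy h2.symm
  · exact hxy h1.symm

theorem proj3_injective [Nontrivial A] : Function.Injective (proj3 (A := A)) := by
  intro i j hij
  obtain ⟨x, y, hxy⟩ := exists_pair_ne A
  by_contra hne
  have := congrFun hij (Function.update (fun _ => y) i x)
  simp [proj3, Function.update_of_ne (Ne.symm hne)] at this
  exact hxy this

theorem minMaj_majorityOpsIn [Nontrivial A] {C : Set (Ops A)} (hC : IsMinimalClone C) :
    MinMaj (majorityOpsIn C) where
  inj := proj3_injective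
  maj h hh := hh.1.comp3_self_left
  proj_notMem i hi := hi.1.ne_proj3 i rfl
  comp_mem h hh u hu v hv w hw huv huw hvw := by
    have sub : Set.range proj3 ∪ majorityOpsIn C ⊆ Set.range proj3 ∪ {g | IsMajority g} :=
      Set.union_subset_union_right _ fun _ hg => hg.1
    have mem : ∀ g ∈ Set.range proj3 ∪ majorityOpsIn C, (⟨2, g⟩ : Ops A) ∈ C := by
      rintro g (⟨i, rfl⟩ | hg)
      · exact hC.1.1 2 i
      · exact hg.2
    exact ⟨hh.1.comp3 (sub hu) (sub hv) (sub hw) huv huw hvw,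
      hC.1.comp3_mem hh.2 (mem u hu) (mem v hv) (mem w hw)⟩
  subset_of_closed S hS := by
    rintro ⟨h, hh⟩ closed g hg
    have mem : ∀ k ∈ S, (⟨2, k⟩ : Ops A) ∈ C ∩ stabilizer (Set.range proj3 ∪ S) :=
      fun k hk => ⟨(hS hk).2, mem_stabilizer fun u hu v hv w hw =>
        (hS hk).1.comp3_mem hv hw fun huv huw hvw =>
          .inr (closed k hk u hu v hv w hw huv huw hvw)⟩
    rcases hC.2.2 _ (hC.1.inter (isClone_stabilizer _)) Set.inter_subset_left with e | e
    · have hp := mem h hh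
      rw [e] at hp
      obtain ⟨i, hi⟩ := hp
      exact absurd hi ((hS hh).1.ne_proj3 i)
    · have hg' := hg.2
      rw [← e] at hg'
      rcases mem_of_mem_stabilizer Set.subset_union_left hg'.2 with ⟨i, hi⟩ | h
      · exact absurd hi.symm (hg.1.ne_proj3 i)
      · exact h

end

/-- **Waldhauser's Theorem on small minimal majority clones.**  If `C` is a minimal
clone on a set `A` generated by a majority operation, then the number of majority
operations belonging to `C` is neither 2 nor 4. -/
theorem waldhauser_not_two_not_four {A : Type u} (f : (Fin 3 → A) → A)
    (hf : IsMajority f) (hmin : IsMinimalClone (cloneGen {(⟨2, f⟩ : Ops A)})) :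
    (majorityOpsIn (cloneGen {(⟨2, f⟩ : Ops A)})).ncard ≠ 2 ∧
    (majorityOpsIn (cloneGen {(⟨2, f⟩ : Ops A)})).ncard ≠ 4 := by
  have hfM : f ∈ majorityOpsIn (cloneGen {(⟨2, f⟩ : Ops A)}) := ⟨hf, fun C hC => hC.2 rfl⟩
  rcases subsingleton_or_nontrivial A with hA | hA
  · have := Set.ncard_le_one_of_subsingleton (majorityOpsIn (cloneGen {(⟨2, f⟩ : Ops A)}))
    omega
  have H := minMaj_majorityOpsIn hmin
  by_cases fin : (majorityOpsIn (cloneGen {(⟨2, f⟩ : Ops A)})).Finite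
  · by_cases rot : ∀ h ∈ majorityOpsIn (cloneGen {(⟨2, f⟩ : Ops A)}),
        comp3 h (proj3 1) (proj3 2) (proj3 0) = h
    · exact H.ncard_of_rot ⟨f, hfM⟩ fin rot
    · push Not at rot
      obtain ⟨h, hh, rot⟩ := rot
      exact H.ncard_of_not_rot fin hh rot
  · simp [Set.Infinite.ncard fin]
end

section
/- Waldhauser's Theorem on cyclically symmetric minimal majority clones. Let C be a minimal clone on a set A generated by a majority operation, and suppose C contains only finitely many majority operations and every majority operation in C is cyclically symmetric, i.e. satisfies f(x₁,x₂,x₃) = f(x₂,x₃,x₁) for all x₁,x₂,x₃ ∈ A. Then C contains exactly one majority operation. -/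
universe u

namespace MajorityClone

variable {A : Type u}

/-- A ternary operation in curried form, as an element of `Ops A`. -/
def ternary (p : A → A → A → A) : Ops A := ⟨2, fun t => p (t 0) (t 1) (t 2)⟩

/-- The majority identities for a curried ternary operation. -/
def Maj (p : A → A → A → A) : Prop :=
  ∀ x y, p x x y = x ∧ p x y x = x ∧ p y x x = x

theorem isClone_cloneGen (F : Set (Ops A)) : IsClone (cloneGen F) := by
  refine ⟨fun n i D hD => hD.1.1 n i, fun n m f g hf hg D hD => ?_⟩
  exact hD.1.2 n m f g (hf D hD) fun i => hg i D hD

theorem cloneGen_subset {F C : Set (Ops A)} (hC : IsClone C) (h : F ⊆ C) : cloneGen F ⊆ C :=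
  fun _ hx => hx C ⟨hC, h⟩

theorem ternary_comp_mem {C : Set (Ops A)} (hC : IsClone C) {p q r s : A → A → A → A}
    (hp : ternary p ∈ C) (hq : ternary q ∈ C) (hr : ternary r ∈ C) (hs : ternary s ∈ C) :
    ternary (fun x y z => p (q x y z) (r x y z) (s x y z)) ∈ C := by
  refine hC.2 2 2 _ ![fun t => q (t 0) (t 1) (t 2), fun t => r (t 0) (t 1) (t 2),
    fun t => s (t 0) (t 1) (t 2)] hp fun i => ?_
  fin_cases i
  exacts [hq, hr, hs]

theorem Maj.mem_majorityOpsIn {C : Set (Ops A)} {p : A → A → A → A} (hp : Maj p)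
    (hpC : ternary p ∈ C) : (fun t => p (t 0) (t 1) (t 2)) ∈ majorityOpsIn C :=
  ⟨fun x y => by simpa using hp x y, hpC⟩

theorem subsingleton_of_isMajority_proj {i : Fin 3}
    (h : IsMajority (fun t : Fin 3 → A => t i)) : Subsingleton A := by
  refine ⟨fun a b => ?_⟩
  have := h a b
  fin_cases i <;> simp_all

/-- The iterates `u ↦ p(u(x,y,z), u(y,x,z), x)` starting from `p`. -/
def twist (p : A → A → A → A) : ℕ → A → A → A → A
  | 0 => p
  | n + 1 => fun x y z => p (twist p n x y z) (twist p n y x z) x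

theorem Maj.twist {p : A → A → A → A} (hp : Maj p) (n : ℕ) : Maj (twist p n) := by
  induction n with
  | zero => exact hp
  | succ n ih =>
    intro x y
    simp [MajorityClone.twist, (ih x y).1, (ih x y).2.1, (ih x y).2.2, (hp x y).1,
      (hp x x).1]

theorem twist_mem {C : Set (Ops A)} (hC : IsClone C) {p : A → A → A → A}
    (hp : ternary p ∈ C) (n : ℕ) : ternary (twist p n) ∈ C := by
  induction n with
  | zero => exact hp
  | succ n ih =>
    have hx : ternary (fun x _ _ : A => x) ∈ C := hC.1 2 0
    have hy : ternary (fun _ y _ : A => y) ∈ C := hC.1 2 1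
    have hz : ternary (fun _ _ z : A => z) ∈ C := hC.1 2 2
    exact ternary_comp_mem (p := p) hC hp ih (ternary_comp_mem hC ih hy hx hz) hx

theorem twist_succ_eq {p : A → A → A → A}
    (hK : ∀ a b c, p (p a b c) (p b a c) a = p (p a b c) (p b a c) b ∧
      p (p a b c) (p b a c) a = p (p a b c) (p b a c) c)
    (n : ℕ) (x y z w : A)
    (hw : w = x ∨ w = y ∨ ∃ k < n, w = twist p k x y z ∨ w = twist p k y x z) :
    p (twist p n x y z) (twist p n y x z) w = twist p (n + 1) x y z ∧
      p (twist p n y x z) (twist p n x y z) w = twist p (n + 1) y x z := by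
  induction n generalizing w with
  | zero =>
    rcases hw with rfl | rfl | ⟨k, hk, -⟩
    · exact ⟨rfl, (hK _ _ _).1.symm⟩
    · exact ⟨(hK _ _ _).1.symm, rfl⟩
    · omega
  | succ n ih =>
    have key : ∀ w', (w' = x ∨ w' = y ∨
        ∃ k < n, w' = twist p k x y z ∨ w' = twist p k y x z) →
        ∀ c, (c = twist p n x y z ∨ c = twist p n y x z) →
        (p (twist p (n + 1) x y z) (twist p (n + 1) y x z) w' =
          p (twist p (n + 1) x y z) (twist p (n + 1) y x z) c) ∧
        (p (twist p (n + 1) y x z) (twist p (n + 1) x y z) w' =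
          p (twist p (n + 1) y x z) (twist p (n + 1) x y z) c) := by
      intro w' hw' c hc
      have h1 := hK (twist p n x y z) (twist p n y x z) w'
      have h2 := hK (twist p n y x z) (twist p n x y z) w'
      rw [(ih w' hw').1, (ih w' hw').2] at h1 h2
      rcases hc with rfl | rfl
      · exact ⟨h1.2.symm, h2.2.symm.trans h2.1⟩
      · exact ⟨h1.2.symm.trans h1.1, h2.2.symm⟩
    have base : ∀ c, (c = twist p n x y z ∨ c = twist p n y x z) →
        p (twist p (n + 1) x y z) (twist p (n + 1) y x z) c = twist p (n + 2) x y z ∧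
        p (twist p (n + 1) y x z) (twist p (n + 1) x y z) c = twist p (n + 2) y x z :=
      fun c hc => ⟨(key x (Or.inl rfl) c hc).1.symm,
        (key y (Or.inr (Or.inl rfl)) c hc).2.symm⟩
    have old : ∀ w', (w' = x ∨ w' = y ∨
        ∃ k < n, w' = twist p k x y z ∨ w' = twist p k y x z) →
        p (twist p (n + 1) x y z) (twist p (n + 1) y x z) w' = twist p (n + 2) x y z ∧
        p (twist p (n + 1) y x z) (twist p (n + 1) x y z) w' = twist p (n + 2) y x z :=
      fun w' hw' => ⟨(key w' hw' _ (Or.inl rfl)).1.trans (base _ (Or.inl rfl)).1,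
        (key w' hw' _ (Or.inl rfl)).2.trans (base _ (Or.inl rfl)).2⟩
    rcases hw with h | h | ⟨k, hk, h⟩
    · exact old w (Or.inl h)
    · exact old w (Or.inr (Or.inl h))
    · rcases Nat.lt_succ_iff_lt_or_eq.mp hk with hk | rfl
      · exact old w (Or.inr (Or.inr ⟨k, hk, h⟩))
      · exact base w h

/-- If `p` satisfies the cyclic identities of `twist_succ_eq`, then a repetition among the
iterates of `twist` forces that iterate to be symmetric in its first two variables. -/
theorem twist_comm {p : A → A → A → A} (hp : Maj p)
    (hK : ∀ a b c, p (p a b c) (p b a c) a = p (p a b c) (p b a c) b ∧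
      p (p a b c) (p b a c) a = p (p a b c) (p b a c) c)
    {m n : ℕ} (hmn : m < n) (h : twist p m = twist p n) (x y z : A) :
    twist p n x y z = twist p n y x z := by
  have h1 := (twist_succ_eq hK n x y z (twist p n x y z)
    (Or.inr (Or.inr ⟨m, hmn, Or.inl (by rw [h])⟩))).1
  have h2 := (twist_succ_eq hK n x y z (twist p n y x z)
    (Or.inr (Or.inr ⟨m, hmn, Or.inr (by rw [h])⟩))).1
  rw [(hp _ _).2.1] at h1
  rw [(hp _ _).2.2] at h2
  exact h1.trans h2.symm

/-- The iterates of the unary polynomial `a ↦ p(a,y,z)`. -/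
def iter (p : A → A → A → A) (k : ℕ) : A → A → A → A :=
  fun x y z => (fun a => p a y z)^[k] x

theorem iter_succ (p : A → A → A → A) (k : ℕ) :
    iter p (k + 1) = fun x y z => p (iter p k x y z) y z := by
  funext x y z
  exact Function.iterate_succ_apply' _ _ _

theorem iter_add (p : A → A → A → A) (k l : ℕ) (x y z : A) :
    iter p (k + l) x y z = iter p k (iter p l x y z) y z :=
  Function.iterate_add_apply _ _ _ _

theorem Maj.iter_succ {p : A → A → A → A} (hp : Maj p) (k : ℕ) : Maj (iter p (k + 1)) := by
  induction k with
  | zero => exact hp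
  | succ k ih =>
    rw [MajorityClone.iter_succ]
    intro x y
    simp [(ih x y).1, (ih x y).2.1, (ih x y).2.2, (hp x y).1, (hp x y).2.1, (hp x x).1]

theorem iter_mem {C : Set (Ops A)} (hC : IsClone C) {p : A → A → A → A}
    (hp : ternary p ∈ C) (k : ℕ) : ternary (iter p k) ∈ C := by
  induction k with
  | zero => exact hC.1 2 0
  | succ k ih =>
    rw [iter_succ]
    exact ternary_comp_mem hC hp ih (hC.1 2 1) (hC.1 2 2)

theorem exists_iter_idem {p : A → A → A → A} {i j : ℕ} (hij : i < j)
    (h : iter p (i + 1) = iter p (j + 1)) :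
    ∃ k, ∀ x y z, iter p (k + 1) (iter p (k + 1) x y z) y z = iter p (k + 1) x y z := by
  obtain ⟨d, rfl⟩ : ∃ d, j = i + (d + 1) := ⟨j - i - 1, by omega⟩
  have step : ∀ a, iter p (i + 1 + a) = iter p (i + 1 + a + (d + 1)) := by
    intro a
    funext x y z
    rw [show i + 1 + a + (d + 1) = a + (i + (d + 1) + 1) by ring, Nat.add_comm (i + 1) a,
      iter_add, h, ← iter_add]
  have mult : ∀ q a, iter p (i + 1 + a) = iter p (i + 1 + a + q * (d + 1)) := by
    intro q a
    induction q with
    | zero => simp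
    | succ q ih =>
      rw [ih, show i + 1 + a + (q + 1) * (d + 1) = i + 1 + (a + q * (d + 1)) + (d + 1) by ring,
        ← step, ← Nat.add_assoc (i + 1)]
  refine ⟨i + (i + 1) * d, fun x y z => ?_⟩
  rw [← iter_add, show i + (i + 1) * d + 1 = i + 1 + (i + 1) * d by ring,
    mult (i + 1) ((i + 1) * d)]
  congr 1
  ring

/-- If `e` is a totally symmetric majority operation with `e(e(x,y,z),y,z) = e(x,y,z)`, then
every ternary operation generated by `e` is a projection or `e` itself. -/
theorem eq_of_mem_cloneGen {e : A → A → A → A} (he : Maj e)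
    (hcyc : ∀ x y z, e x y z = e y z x) (hsw : ∀ x y z, e x y z = e y x z)
    (hid : ∀ x y z, e (e x y z) y z = e x y z) {h : (Fin 3 → A) → A}
    (hh : (⟨2, h⟩ : Ops A) ∈ cloneGen {ternary e}) :
    (∃ i, h = fun t => t i) ∨ h = fun t => e (t 0) (t 1) (t 2) := by
  let S : Set ((Fin 3 → A) → A) :=
    {fun t => t 0, fun t => t 1, fun t => t 2, fun t => e (t 0) (t 1) (t 2)}
  let D : Set (Ops A) := {o | ∀ q : Fin (o.1 + 1) → (Fin 3 → A) → A, (∀ i, q i ∈ S) →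
    (fun t => o.2 fun i => q i t) ∈ S}
  have hD : IsClone D :=
    ⟨fun n i q hq => hq i, fun n m f g hf hg q hq => hf _ fun i => hg i q hq⟩
  have hsw' : ∀ x y z, e x y z = e x z y := fun x y z => by rw [hcyc, hsw, ← hcyc, hcyc, hcyc]
  have hmaj1 : ∀ x y, e x x y = x := fun x y => (he x y).1
  have hmaj2 : ∀ x y, e x y x = x := fun x y => (he x y).2.1
  have hmaj3 : ∀ x y, e y x x = x := fun x y => (he x y).2.2
  have heD : ternary e ∈ D := by
    intro q hq
    have h0 := hq (0 : Fin 3)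
    have h1 := hq (1 : Fin 3)
    have h2 := hq (2 : Fin 3)
    change (fun t => e (q (0 : Fin 3) t) (q (1 : Fin 3) t) (q (2 : Fin 3) t)) ∈ S
    generalize q (0 : Fin 3) = a at *
    generalize q (1 : Fin 3) = b at *
    generalize q (2 : Fin 3) = c at *
    have hid2 : ∀ x y z, e (e x y z) x z = e x y z := fun x y z => by rw [hsw x y z, hid]
    have hid3 : ∀ x y z, e (e x y z) x y = e x y z := fun x y z => by rw [← hcyc z x y, hid]
    have hidl : ∀ x y z, e y (e x y z) z = e x y z := fun x y z => by rw [hsw, hid]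
    have hidl2 : ∀ x y z, e x (e x y z) z = e x y z := fun x y z => by rw [hsw, hid2]
    have hidl3 : ∀ x y z, e x (e x y z) y = e x y z := fun x y z => by rw [hsw, hid3]
    have hidr : ∀ x y z, e y z (e x y z) = e x y z := fun x y z => by rw [← hcyc, hid]
    have hidr2 : ∀ x y z, e x z (e x y z) = e x y z := fun x y z => by rw [← hcyc, hid2]
    have hidr3 : ∀ x y z, e x y (e x y z) = e x y z := fun x y z => by rw [← hcyc, hid3]
    rcases h0 with rfl | rfl | rfl | rfl <;> rcases h1 with rfl | rfl | rfl | rfl <;>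
      rcases h2 with rfl | rfl | rfl | rfl <;>
      first
      | (refine Or.inl (funext fun t => ?_); simp only [hmaj1, hmaj2, hmaj3]; done)
      | (refine Or.inr (Or.inl (funext fun t => ?_)); simp only [hmaj1, hmaj2, hmaj3]; done)
      | (refine Or.inr (Or.inr (Or.inl (funext fun t => ?_)))
         simp only [hmaj1, hmaj2, hmaj3]; done)
      | (refine Or.inr (Or.inr (Or.inr (funext fun t => ?_)))
         beta_reduce
         generalize t 0 = x, t 1 = y, t 2 = z
         simp only [hmaj1, hmaj2, hmaj3, hid, hid2, hid3, hidl, hidl2, hidl3, hidr, hidr2,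
           hidr3, hsw, hsw'])
  have hproj : ∀ i : Fin 3, (fun t : Fin 3 → A => t i) ∈ S := fun i => by
    fin_cases i
    exacts [Or.inl rfl, Or.inr (Or.inl rfl), Or.inr (Or.inr (Or.inl rfl))]
  have hS := cloneGen_subset hD (Set.singleton_subset_iff.mpr heD) hh (fun i t => t i) hproj
  rcases hS with h | h | h | h
  exacts [Or.inl ⟨0, h⟩, Or.inl ⟨1, h⟩, Or.inl ⟨2, h⟩, Or.inr h]

end MajorityClone

open MajorityClone

/-- **Waldhauser's Theorem on cyclically symmetric minimal majority clones.**  Let `C`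
be a minimal clone on a set `A` generated by a majority operation, containing only
finitely many majority operations, all of which are cyclically symmetric.  Then `C`
contains exactly one majority operation. -/
theorem waldhauser_cyclically_symmetric {A : Type u} (f : (Fin 3 → A) → A)
    (hf : IsMajority f) (hmin : IsMinimalClone (cloneGen {(⟨2, f⟩ : Ops A)}))
    (hfin : (majorityOpsIn (cloneGen {(⟨2, f⟩ : Ops A)})).Finite)
    (hcyc : ∀ g ∈ majorityOpsIn (cloneGen {(⟨2, f⟩ : Ops A)}),
        ∀ t : Fin 3 → A, g t = g (fun i => t (i + 1))) :
    (majorityOpsIn (cloneGen {(⟨2, f⟩ : Ops A)})).ncard = 1 := by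
  have hC := isClone_cloneGen {(⟨2, f⟩ : Ops A)}
  have hfC : (⟨2, f⟩ : Ops A) ∈ cloneGen {(⟨2, f⟩ : Ops A)} := fun D hD => hD.2 rfl
  generalize cloneGen {(⟨2, f⟩ : Ops A)} = C at *
  have hsub : Subsingleton A → (majorityOpsIn C).ncard = 1 := fun hA =>
    Set.ncard_eq_one.mpr ⟨f, Set.eq_singleton_iff_unique_mem.mpr
      ⟨⟨hf, hfC⟩, fun g _ => Subsingleton.elim g f⟩⟩
  have hcyc' : ∀ p : A → A → A → A, Maj p → ternary p ∈ C → ∀ x y z, p x y z = p y z x :=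
    fun p hp hpC x y z => hcyc _ (hp.mem_majorityOpsIn hpC) ![x, y, z]
  have curry_inj : ∀ p q : A → A → A → A, (fun t : Fin 3 → A => p (t 0) (t 1) (t 2)) =
      (fun t => q (t 0) (t 1) (t 2)) → p = q := fun p q h => by
    funext x y z
    exact congrFun h ![x, y, z]
  let p : A → A → A → A := fun x y z => f ![x, y, z]
  have hp : Maj p := hf
  have hpC : ternary p ∈ C := by
    have : ternary p = ⟨2, f⟩ := by
      simp only [ternary, p]
      congr
      funext t
      congr 1
      funext i
      fin_cases i <;> rfl
    rwa [this]
  have hpcyc := hcyc' p hp hpC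
  have hK : ∀ a b c, p (p a b c) (p b a c) a = p (p a b c) (p b a c) b ∧
      p (p a b c) (p b a c) a = p (p a b c) (p b a c) c := by
    have hG := hcyc' _ (hp.twist 1) (twist_mem hC hpC 1)
    have hG' : ∀ a b c, p (p a b c) (p b a c) a = p (p b c a) (p c b a) b := hG
    intro a b c
    have h1 := hG' a b c
    have h2 := hG' b c a
    rw [← hpcyc a b c, hpcyc c b a] at h1
    rw [← hpcyc a b c, hpcyc c b a, hpcyc c a b, hpcyc a c b, hpcyc c b a] at h2
    exact ⟨h1, h1.trans h2⟩
  obtain ⟨m, n, hmn, hrep⟩ := hfin.exists_lt_map_eq_of_forall_mem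
    (f := fun (n : ℕ) (t : Fin 3 → A) => twist p n (t 0) (t 1) (t 2))
    fun n => (hp.twist n).mem_majorityOpsIn (twist_mem hC hpC n)
  have hgsw := twist_comm hp hK hmn (curry_inj _ _ hrep)
  have hg := hp.twist n
  have hgC := twist_mem hC hpC n
  generalize twist p n = g at *
  have hgcyc := hcyc' g hg hgC
  obtain ⟨i, j, hij, hrep'⟩ := hfin.exists_lt_map_eq_of_forall_mem
    (f := fun (n : ℕ) (t : Fin 3 → A) => iter g (n + 1) (t 0) (t 1) (t 2))
    fun n => (hg.iter_succ n).mem_majorityOpsIn (iter_mem hC hgC (n + 1))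
  obtain ⟨k, hid⟩ := exists_iter_idem hij (curry_inj _ _ hrep')
  have he := hg.iter_succ k
  have heC := iter_mem hC hgC (k + 1)
  have hecyc := hcyc' _ he heC
  have hesw : ∀ x y z, iter g (k + 1) x y z = iter g (k + 1) y x z := by
    intro x y z
    have hg' : ∀ a, g a x y = g a y x := fun a =>
      (hgcyc a x y).trans ((hgsw x y a).trans (hgcyc a y x).symm)
    rw [← hecyc z x y, ← hecyc z y x]
    simp only [iter, hg']
  generalize iter g (k + 1) = e at *
  have hsubC : cloneGen {ternary e} ⊆ C :=
    cloneGen_subset hC (Set.singleton_subset_iff.mpr heC)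
  rcases hmin.2.2 _ (isClone_cloneGen {ternary e}) hsubC with hD | hD
  · have heD : ternary e ∈ projClone A := hD ▸ fun D hD => hD.2 rfl
    obtain ⟨i, hi⟩ := heD
    have hi' : (fun t : Fin 3 → A => e (t 0) (t 1) (t 2)) = fun t => t i := hi
    exact hsub (subsingleton_of_isMajority_proj (hi' ▸ (he.mem_majorityOpsIn heC).1))
  · refine Set.ncard_eq_one.mpr ⟨_, Set.eq_singleton_iff_unique_mem.mpr
      ⟨he.mem_majorityOpsIn heC, fun h hh => ?_⟩⟩
    rcases eq_of_mem_cloneGen he hecyc hesw hid (hD ▸ hh.2) with ⟨i, rfl⟩ | h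
    · have := subsingleton_of_isMajority_proj hh.1
      exact Subsingleton.elim _ _
    · exact h
end
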